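/- arXiv:1205.2995 — 8 statements merged into one kernel-verified Lean document; each statement's English description precedes it below -/
import Mathlib

section
/- For every integer q ≥ 1, every interval [a,b] with a < b, and every bounded integrable function v : [a,b] → ℝ, there exists a unique polynomial p of degree at most q such that p(a) = v(a), p(b) = v(b), and ∫_a^b (v − p)·w dx = 0 for every polynomial w of degree at most q − 2 (the last condition being vacuous for q = 1). -/
open MeasureTheory

theorem cG_key (q : ℕ) (a b : ℝ) (hab : a < b) (p : Polynomial ℝ) (hp : p.natDegree ≤ q)
    (ha : p.eval a = 0) (hb : p.eval b = 0)
    (hw : ∀ w : Polynomial ℝ, w.natDegree + 2 ≤ q →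
      (∫ x in a..b, p.eval x * w.eval x) = 0) : p = 0 := by
  by_contra hne
  obtain ⟨s, rfl⟩ := Polynomial.dvd_iff_isRoot.mpr ha
  have hs : s.eval b = 0 := by
    rw [Polynomial.eval_mul] at hb
    rcases mul_eq_zero.mp hb with h | h
    · simp at h; linarith
    · exact h
  obtain ⟨r, rfl⟩ := Polynomial.dvd_iff_isRoot.mpr hs
  have hr : r ≠ 0 := by
    rintro rfl; simp at hne
  have hd : r.natDegree + 2 ≤ q := by
    rw [Polynomial.natDegree_mul (Polynomial.X_sub_C_ne_zero a)
      (mul_ne_zero (Polynomial.X_sub_C_ne_zero b) hr),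
      Polynomial.natDegree_mul (Polynomial.X_sub_C_ne_zero b) hr,
      Polynomial.natDegree_X_sub_C, Polynomial.natDegree_X_sub_C] at hp
    omega
  have h0 := hw r hd
  have hpos : 0 < ∫ x in a..b, (x - a) * (b - x) * (r.eval x) ^ 2 := by
    obtain ⟨c, hc, hcr⟩ := ((Set.Ioo_infinite hab).sdiff
      (r.roots.toFinset.finite_toSet)).nonempty
    have hcr' : r.eval c ≠ 0 := by
      intro h
      apply hcr
      simp [hr, h]
    refine intervalIntegral.integral_pos hab ?_ ?_ ⟨c, ⟨hc.1.le, hc.2.le⟩, ?_⟩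
    · have := r.continuous
      fun_prop
    · intro x hx
      exact mul_nonneg (mul_nonneg (by linarith [hx.1]) (by linarith [hx.2])) (sq_nonneg _)
    · have h1 := sub_pos.mpr hc.1
      have h2 := sub_pos.mpr hc.2
      positivity
  have he : (∫ x in a..b, (x - a) * (b - x) * (r.eval x) ^ 2) =
      -∫ x in a..b, ((Polynomial.X - Polynomial.C a) *
        ((Polynomial.X - Polynomial.C b) * r)).eval x * r.eval x := by
    rw [← intervalIntegral.integral_neg]
    congr 1
    ext x
    simp
    ring
  rw [he, h0] at hpos
  simp at hpos

theorem cG_interpolant_existsUnique (q : ℕ) (hq : 1 ≤ q) (a b : ℝ) (hab : a < b)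
    (v : ℝ → ℝ) (hvint : IntervalIntegrable v volume a b)
    (hvbdd : ∃ M : ℝ, ∀ x ∈ Set.Icc a b, |v x| ≤ M) :
    ∃! p : Polynomial ℝ, p.natDegree ≤ q ∧ p.eval a = v a ∧ p.eval b = v b ∧
      ∀ w : Polynomial ℝ, w.natDegree + 2 ≤ q →
        (∫ x in a..b, (v x - p.eval x) * w.eval x) = 0 := by
  obtain ⟨n, rfl⟩ : ∃ n, q = n + 1 := ⟨q - 1, by omega⟩
  have hpi : ∀ p w : Polynomial ℝ,
      IntervalIntegrable (fun x => p.eval x * w.eval x) volume a b := fun p w =>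
    (p.continuous.mul w.continuous).intervalIntegrable a b
  have hvi : ∀ w : Polynomial ℝ,
      IntervalIntegrable (fun x => v x * w.eval x) volume a b := fun w =>
    hvint.mul_continuousOn w.continuous.continuousOn
  have hsplit : ∀ p w : Polynomial ℝ, (∫ x in a..b, (v x - p.eval x) * w.eval x) =
      (∫ x in a..b, v x * w.eval x) - ∫ x in a..b, p.eval x * w.eval x := by
    intro p w
    rw [← intervalIntegral.integral_sub (hvi w) (hpi p w)]
    simp only [sub_mul]
  let I : Polynomial ℝ → Polynomial ℝ →ₗ[ℝ] ℝ := fun w =>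
    { toFun := fun p => ∫ x in a..b, p.eval x * w.eval x
      map_add' := fun p r => by
        rw [← intervalIntegral.integral_add (hpi p w) (hpi r w)]
        simp only [Polynomial.eval_add, add_mul]
      map_smul' := fun c p => by
        simp only [Polynomial.eval_smul, smul_eq_mul, mul_assoc, RingHom.id_apply,
          intervalIntegral.integral_const_mul] }
  -- testing against monomials suffices
  have hmono : ∀ f : ℝ → ℝ, IntervalIntegrable f volume a b →
      (∀ i : Fin n, ∫ x in a..b, f x * x ^ (i : ℕ) = 0) →
      ∀ w : Polynomial ℝ, w.natDegree + 2 ≤ n + 1 → ∫ x in a..b, f x * w.eval x = 0 := by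
    intro f hf h w hw
    have hx : ∀ x, f x * w.eval x =
        ∑ i ∈ Finset.range n, w.coeff i * (f x * x ^ i) := by
      intro x
      rw [Polynomial.eval_eq_sum_range' (n := n) (by omega), Finset.mul_sum]
      exact Finset.sum_congr rfl fun i _ => by ring
    simp only [hx]
    rw [intervalIntegral.integral_finsetSum]
    · refine Finset.sum_eq_zero fun i hi => ?_
      rw [intervalIntegral.integral_const_mul, h ⟨i, Finset.mem_range.mp hi⟩, mul_zero]
    · intro i _
      exact (hf.mul_continuousOn (continuous_pow i).continuousOn).const_mul _
  let L : Polynomial.degreeLT ℝ (n + 2) →ₗ[ℝ] ℝ × ℝ × (Fin n → ℝ) :=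
    ((Polynomial.leval a).prod ((Polynomial.leval b).prod
      (LinearMap.pi fun i : Fin n => I (Polynomial.X ^ (i : ℕ))))).comp
      (Polynomial.degreeLT ℝ (n + 2)).subtype
  have hL : ∀ (p : Polynomial ℝ) (hp : p ∈ Polynomial.degreeLT ℝ (n + 2)), L ⟨p, hp⟩ =
      (p.eval a, p.eval b, fun i : Fin n =>
        ∫ x in a..b, p.eval x * (Polynomial.X ^ (i : ℕ) : Polynomial ℝ).eval x) :=
    fun p hp => rfl
  have hdeg : ∀ p : Polynomial ℝ, p ∈ Polynomial.degreeLT ℝ (n + 2) ↔ p.natDegree ≤ n + 1 := by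
    intro p
    rw [Polynomial.mem_degreeLT]
    constructor
    · intro h
      by_cases h0 : p = 0
      · simp [h0]
      · exact Nat.lt_succ_iff.mp ((Polynomial.natDegree_lt_iff_degree_lt h0).mpr h)
    · intro h
      exact lt_of_le_of_lt (Polynomial.degree_le_of_natDegree_le h)
        (by exact_mod_cast Nat.lt_succ_self (n + 1))
  have hinj : Function.Injective L := by
    rw [← LinearMap.ker_eq_bot, LinearMap.ker_eq_bot']
    rintro ⟨p, hp⟩ h
    rw [hL] at h
    simp only [Prod.mk_eq_zero] at h
    obtain ⟨h1, h2, h3⟩ := h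
    have := cG_key (n + 1) a b hab p ((hdeg p).mp hp) h1 h2
      (hmono _ (p.continuous.intervalIntegrable a b) fun i => by
        simpa using congrFun h3 i)
    exact Subtype.ext this
  have hfr : Module.finrank ℝ (Polynomial.degreeLT ℝ (n + 2)) =
      Module.finrank ℝ (ℝ × ℝ × (Fin n → ℝ)) := by
    rw [(Polynomial.degreeLTEquiv ℝ (n + 2)).finrank_eq]
    simp
    omega
  have : Module.Finite ℝ (Polynomial.degreeLT ℝ (n + 2)) :=
    Module.Finite.equiv (Polynomial.degreeLTEquiv ℝ (n + 2)).symm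
  have hsurj : Function.Surjective L :=
    (LinearMap.injective_iff_surjective_of_finrank_eq_finrank hfr).mp hinj
  obtain ⟨⟨p, hp⟩, h⟩ := hsurj (v a, v b, fun i => ∫ x in a..b, v x * x ^ (i : ℕ))
  rw [hL] at h
  simp only [Prod.mk.injEq] at h
  obtain ⟨h1, h2, h3⟩ := h
  refine ⟨p, ⟨(hdeg p).mp hp, h1, h2, ?_⟩, ?_⟩
  · refine hmono _ (hvint.sub (p.continuous.intervalIntegrable a b)) fun i => ?_
    have h4 := congrFun h3 i
    have h5 := hsplit p (Polynomial.X ^ (i : ℕ))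
    simp at h4 h5
    rw [h5, h4, sub_self]
  · rintro r ⟨hr, hra, hrb, hrw⟩
    have hpw : ∀ w : Polynomial ℝ, w.natDegree + 2 ≤ n + 1 →
        (∫ x in a..b, (v x - p.eval x) * w.eval x) = 0 := by
      refine hmono _ (hvint.sub (p.continuous.intervalIntegrable a b)) fun i => ?_
      have h4 := congrFun h3 i
      have h5 := hsplit p (Polynomial.X ^ (i : ℕ))
      simp at h4 h5
      rw [h5, h4, sub_self]
    refine sub_eq_zero.mp (cG_key (n + 1) a b hab (r - p) ?_ ?_ ?_ ?_)
    · exact (Polynomial.natDegree_sub_le _ _).trans (max_le hr ((hdeg p).mp hp))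
    · simp [hra, h1]
    · simp [hrb, h2]
    · intro w hw
      have e1 := hrw w hw
      have e2 := hpw w hw
      rw [hsplit] at e1 e2
      have := (I w).map_sub r p
      simp only [I, LinearMap.coe_mk, AddHom.coe_mk] at this
      rw [this]
      linarith
end

section
/- For every integer q ≥ 0, every interval [a,b] with a < b, and every bounded integrable function v : [a,b] → ℝ, there exists a unique polynomial p of degree at most q such that p(b) = v(b) and ∫_a^b (v − p)·w dx = 0 for every polynomial w of degree at most q − 1 (the last condition being vacuous for q = 0). -/
open MeasureTheory

theorem dG_intervalIntegrable (a b : ℝ) (p w : Polynomial ℝ) :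
    IntervalIntegrable (fun x => p.eval x * w.eval x) volume a b :=
  (p.continuous.mul w.continuous).intervalIntegrable a b

/-- The bilinear form `(p, w) ↦ ∫ p w`. -/
noncomputable def dGForm (a b : ℝ) :
    Polynomial ℝ →ₗ[ℝ] Polynomial ℝ →ₗ[ℝ] ℝ :=
  LinearMap.mk₂ ℝ (fun p w => ∫ x in a..b, p.eval x * w.eval x)
    (by
      intro p p' w
      rw [← intervalIntegral.integral_add
        (dG_intervalIntegrable a b p w)
        (dG_intervalIntegrable a b p' w)]
      simp only [Polynomial.eval_add, add_mul])
    (by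
      intro c p w
      simp only [Polynomial.eval_smul, smul_eq_mul, mul_assoc,
        intervalIntegral.integral_const_mul])
    (by
      intro p w w'
      rw [← intervalIntegral.integral_add
        (dG_intervalIntegrable a b p w)
        (dG_intervalIntegrable a b p w')]
      simp only [Polynomial.eval_add, mul_add])
    (by
      intro c p w
      simp only [Polynomial.eval_smul, smul_eq_mul, mul_left_comm _ c,
        intervalIntegral.integral_const_mul])

theorem dGForm_apply (a b : ℝ) (p w : Polynomial ℝ) :
    dGForm a b p w = ∫ x in a..b, p.eval x * w.eval x := rfl

/-- The functional `w ↦ ∫ v w`. -/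
noncomputable def dGFunctional (a b : ℝ) (v : ℝ → ℝ)
    (hv : IntervalIntegrable v volume a b) : Polynomial ℝ →ₗ[ℝ] ℝ where
  toFun w := ∫ x in a..b, v x * w.eval x
  map_add' w w' := by
    rw [← intervalIntegral.integral_add
      (hv.mul_continuousOn w.continuous.continuousOn)
      (hv.mul_continuousOn w'.continuous.continuousOn)]
    simp only [Polynomial.eval_add, mul_add]
  map_smul' c w := by
    simp only [Polynomial.eval_smul, smul_eq_mul, mul_left_comm _ c,
      intervalIntegral.integral_const_mul, RingHom.id_apply]

theorem dGFunctional_apply (a b : ℝ) (v : ℝ → ℝ)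
    (hv : IntervalIntegrable v volume a b) (w : Polynomial ℝ) :
    dGFunctional a b v hv w = ∫ x in a..b, v x * w.eval x := rfl

theorem dG_kernel (q : ℕ) (a b : ℝ) (hab : a < b) (p : Polynomial ℝ)
    (hp : p.natDegree ≤ q) (hpb : p.eval b = 0)
    (h : ∀ w : Polynomial ℝ, w.natDegree + 1 ≤ q → dGForm a b p w = 0) : p = 0 := by
  by_contra hne
  obtain ⟨r, rfl⟩ := Polynomial.dvd_iff_isRoot.mpr hpb
  have hr : r ≠ 0 := right_ne_zero_of_mul hne
  have hdeg : r.natDegree + 1 ≤ q := by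
    rw [Polynomial.natDegree_mul (Polynomial.X_sub_C_ne_zero b) hr,
      Polynomial.natDegree_X_sub_C] at hp
    omega
  have h0 := h r hdeg
  rw [dGForm_apply] at h0
  apply hr
  have hex : ∃ c ∈ Set.Ioo a b, r.eval c ≠ 0 := by
    by_contra! hall
    exact hr (Polynomial.eq_zero_of_infinite_isRoot r
      ((Set.Ioo_infinite hab).mono fun x hx => hall x hx))
  obtain ⟨c, hc, hrc⟩ := hex
  have hpos : 0 < ∫ x in a..b, (b - x) * (r.eval x * r.eval x) := by
    apply intervalIntegral.integral_pos hab
    · have := r.continuous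
      fun_prop
    · intro x hx
      exact mul_nonneg (by linarith [hx.2]) (mul_self_nonneg _)
    · exact ⟨c, ⟨hc.1.le, hc.2.le⟩,
        mul_pos (by linarith [hc.2]) (mul_self_pos.mpr hrc)⟩
  have heq : (∫ x in a..b, (b - x) * (r.eval x * r.eval x))
      = -∫ x in a..b, (((Polynomial.X - Polynomial.C b) * r).eval x) * r.eval x := by
    rw [← intervalIntegral.integral_neg]
    congr 1
    ext x
    simp only [Polynomial.eval_mul, Polynomial.eval_sub, Polynomial.eval_X, Polynomial.eval_C]
    ring
  rw [heq, h0] at hpos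
  simp at hpos

theorem dG_mem_degreeLT (n : ℕ) (p : Polynomial ℝ) (h : p.natDegree + 1 ≤ n) :
    p ∈ Polynomial.degreeLT ℝ n := by
  rw [Polynomial.mem_degreeLT]
  exact lt_of_le_of_lt Polynomial.degree_le_natDegree (by exact_mod_cast h)

theorem dG_finrank (n : ℕ) : Module.finrank ℝ (Polynomial.degreeLT ℝ n) = n := by
  rw [(Polynomial.degreeLTEquiv ℝ n).finrank_eq, Module.finrank_fin_fun]

theorem dG_finite (n : ℕ) : Module.Finite ℝ (Polynomial.degreeLT ℝ n) :=
  Module.Finite.equiv (Polynomial.degreeLTEquiv ℝ n).symm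

/-- The linear map `p ↦ (p b, w ↦ ∫ p w)`. -/
noncomputable def dGMap (q : ℕ) (a b : ℝ) :
    Polynomial.degreeLT ℝ (q + 1) →ₗ[ℝ] ℝ × Module.Dual ℝ (Polynomial.degreeLT ℝ q) :=
  ((Polynomial.leval b).prod
    ((LinearMap.lcomp ℝ ℝ (Polynomial.degreeLT ℝ q).subtype).comp (dGForm a b))).comp
    (Polynomial.degreeLT ℝ (q + 1)).subtype

theorem dGMap_surjective (q : ℕ) (a b : ℝ) (hab : a < b) :
    Function.Surjective (dGMap q a b) := by
  have := dG_finite q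
  have := dG_finite (q + 1)
  have hf : Module.finrank ℝ (Polynomial.degreeLT ℝ (q + 1)) =
      Module.finrank ℝ (ℝ × Module.Dual ℝ (Polynomial.degreeLT ℝ q)) := by
    rw [Module.finrank_prod, Subspace.dual_finrank_eq, dG_finrank, dG_finrank,
      Module.finrank_self, add_comm]
  rw [← LinearMap.injective_iff_surjective_of_finrank_eq_finrank hf,
    injective_iff_map_eq_zero]
  rintro ⟨p, hp⟩ h
  have h1 : p.eval b = 0 := congrArg Prod.fst h
  have h2 := congrArg Prod.snd h
  have hd : p.natDegree ≤ q := by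
    rw [Polynomial.mem_degreeLT] at hp
    exact Polynomial.natDegree_le_of_degree_le (Order.le_of_lt_succ (by exact_mod_cast hp))
  exact Subtype.ext (dG_kernel q a b hab p hd h1 fun w hw =>
    LinearMap.congr_fun h2 ⟨w, dG_mem_degreeLT q w hw⟩)

theorem dG_integral (a b : ℝ) (v : ℝ → ℝ) (hv : IntervalIntegrable v volume a b)
    (p w : Polynomial ℝ) :
    (∫ x in a..b, (v x - p.eval x) * w.eval x)
      = dGFunctional a b v hv w - dGForm a b p w := by
  rw [dGFunctional_apply, dGForm_apply, ← intervalIntegral.integral_sub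
    (hv.mul_continuousOn w.continuous.continuousOn)
    (dG_intervalIntegrable a b p w)]
  simp only [sub_mul]

/-- Existence and uniqueness of the discontinuous Galerkin interpolant `π_dG^[q] v`:
for `q ≥ 0`, `a < b` and every bounded integrable `v : [a,b] → ℝ` there is a unique
polynomial `p` of degree at most `q` with `p b = v b` and
`∫_a^b (v - p) w = 0` for every polynomial `w` of degree at most `q - 1`
(a vacuous condition when `q = 0`). -/
theorem dG_interpolant_existsUnique (q : ℕ) (a b : ℝ) (hab : a < b)
    (v : ℝ → ℝ) (hvint : IntervalIntegrable v volume a b)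
    (hvbdd : ∃ M : ℝ, ∀ x ∈ Set.Icc a b, |v x| ≤ M) :
    ∃! p : Polynomial ℝ, p.natDegree ≤ q ∧ p.eval b = v b ∧
      ∀ w : Polynomial ℝ, w.natDegree + 1 ≤ q →
        (∫ x in a..b, (v x - p.eval x) * w.eval x) = 0 := by
  simp only [dG_integral a b v hvint]
  obtain ⟨⟨p, hp⟩, h⟩ := dGMap_surjective q a b hab
    (v b, (dGFunctional a b v hvint).comp (Polynomial.degreeLT ℝ q).subtype)
  have h1 : p.eval b = v b := congrArg Prod.fst h
  have h2 := congrArg Prod.snd h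
  have hd : p.natDegree ≤ q := by
    rw [Polynomial.mem_degreeLT] at hp
    exact Polynomial.natDegree_le_of_degree_le (Order.le_of_lt_succ (by exact_mod_cast hp))
  have h3 : ∀ w : Polynomial ℝ, w.natDegree + 1 ≤ q →
      dGForm a b p w = dGFunctional a b v hvint w := fun w hw =>
    LinearMap.congr_fun h2 ⟨w, dG_mem_degreeLT q w hw⟩
  refine ⟨p, ⟨hd, h1, fun w hw => by rw [h3 w hw, sub_self]⟩, ?_⟩
  rintro p' ⟨hd', h1', h3'⟩
  rw [← sub_eq_zero]
  refine dG_kernel q a b hab _ ((Polynomial.natDegree_sub_le _ _).trans (max_le hd' hd)) ?_ ?_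
  · rw [Polynomial.eval_sub, h1, h1', sub_self]
  · intro w hw
    have := h3' w hw
    rw [map_sub, LinearMap.sub_apply, h3 w hw]
    linarith
end

section
/- For every integer q ≥ 1, the map v ↦ π_cG^[q] v on bounded integrable functions on [a,b] is linear, satisfies π_cG^[q] v = v whenever v is a polynomial of degree at most q, and there is a constant C = C(q) > 0, independent of the interval [a,b], such that ‖π_cG^[q] v‖_{L∞([a,b])} ≤ C·‖v‖_{L∞([a,b])} for every bounded integrable v : [a,b] → ℝ. -/
open MeasureTheory

/-- `p` is the cG interpolant of `v` on `[a,b]`. -/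
def IsCG (q : ℕ) (a b : ℝ) (v : ℝ → ℝ) (p : Polynomial ℝ) : Prop :=
  p.natDegree ≤ q ∧ p.eval a = v a ∧ p.eval b = v b ∧
    ∀ w : Polynomial ℝ, w.natDegree + 2 ≤ q →
      (∫ x in a..b, (v x - p.eval x) * w.eval x) = 0

lemma cg_int_mul {a b : ℝ} {v : ℝ → ℝ} (hv : IntervalIntegrable v volume a b)
    (w : Polynomial ℝ) : IntervalIntegrable (fun x => v x * w.eval x) volume a b :=
  hv.mul_continuousOn w.continuous.continuousOn

lemma cg_poly_int (a b : ℝ) (p : Polynomial ℝ) :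
    IntervalIntegrable (fun x => p.eval x) volume a b :=
  p.continuous.intervalIntegrable a b

lemma cg_unique_zero (q : ℕ) {a b : ℝ} (hab : a < b) (p : Polynomial ℝ) (hd : p.natDegree ≤ q)
    (ha : p.eval a = 0) (hb : p.eval b = 0)
    (hw : ∀ w : Polynomial ℝ, w.natDegree + 2 ≤ q → (∫ x in a..b, p.eval x * w.eval x) = 0) :
    p = 0 := by
  by_contra hp
  obtain ⟨s, rfl⟩ := Polynomial.dvd_iff_isRoot.mpr ha
  have hs : s.eval b = 0 := by
    rw [Polynomial.eval_mul] at hb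
    rcases mul_eq_zero.mp hb with h | h
    · simp at h; linarith
    · exact h
  obtain ⟨r, rfl⟩ := Polynomial.dvd_iff_isRoot.mpr hs
  have hr : r ≠ 0 := by rintro rfl; simp at hp
  have hdeg : r.natDegree + 2 ≤ q := by
    rw [Polynomial.natDegree_mul (Polynomial.X_sub_C_ne_zero a)
      (mul_ne_zero (Polynomial.X_sub_C_ne_zero b) hr),
      Polynomial.natDegree_mul (Polynomial.X_sub_C_ne_zero b) hr,
      Polynomial.natDegree_X_sub_C, Polynomial.natDegree_X_sub_C] at hd
    omega
  have h0 := hw r hdeg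
  have h1 : ∫ x in a..b, (x - a) * (b - x) * (r.eval x) ^ 2 = 0 := by
    rw [← neg_eq_zero, ← intervalIntegral.integral_neg, ← h0]
    congr 1; ext x; simp; ring
  have hpos : ∀ x ∈ Set.Ioc a b, 0 ≤ (x - a) * (b - x) * (r.eval x) ^ 2 := fun x hx =>
    mul_nonneg (mul_nonneg (by linarith [hx.1]) (by linarith [hx.2])) (sq_nonneg _)
  have hcont : Continuous (fun x => (x - a) * (b - x) * (r.eval x) ^ 2) := by
    have := r.continuous
    fun_prop
  obtain ⟨c, hc, hrc⟩ : ∃ c ∈ Set.Ioo a b, r.eval c ≠ 0 := by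
    by_contra! h
    apply hr
    apply Polynomial.eq_zero_of_infinite_isRoot
    exact (Set.Ioo_infinite hab).mono h
  have := intervalIntegral.integral_pos hab hcont.continuousOn hpos
    ⟨c, ⟨hc.1.le, hc.2.le⟩, by
      have h1 : 0 < c - a := by linarith [hc.1]
      have h2 : 0 < b - c := by linarith [hc.2]
      positivity⟩
  linarith

lemma IsCG.orth {q : ℕ} {a b : ℝ} {v : ℝ → ℝ} {p : Polynomial ℝ} (h : IsCG q a b v p)
    (hv : IntervalIntegrable v volume a b) (w : Polynomial ℝ) (hw : w.natDegree + 2 ≤ q) :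
    ∫ x in a..b, p.eval x * w.eval x = ∫ x in a..b, v x * w.eval x := by
  have h0 := h.2.2.2 w hw
  simp only [sub_mul] at h0
  rw [intervalIntegral.integral_sub (cg_int_mul hv w) (cg_int_mul (cg_poly_int a b p) w)] at h0
  linarith

lemma IsCG.unique {q : ℕ} {a b : ℝ} (hab : a < b) {v : ℝ → ℝ} {p p' : Polynomial ℝ}
    (hv : IntervalIntegrable v volume a b)
    (h : IsCG q a b v p) (h' : IsCG q a b v p') : p = p' := by
  rw [← sub_eq_zero]
  apply cg_unique_zero q hab
  · exact (Polynomial.natDegree_sub_le _ _).trans (max_le h.1 h'.1)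
  · simp [h.2.1, h'.2.1]
  · simp [h.2.2.1, h'.2.2.1]
  · intro w hw
    simp only [Polynomial.eval_sub, sub_mul]
    rw [intervalIntegral.integral_sub (cg_int_mul (cg_poly_int a b p) w)
      (cg_int_mul (cg_poly_int a b p') w), h.orth hv w hw, h'.orth hv w hw, sub_self]

lemma IsCG.add {q : ℕ} {a b : ℝ} {u v : ℝ → ℝ} {p p' : Polynomial ℝ}
    (hu : IntervalIntegrable u volume a b) (hv : IntervalIntegrable v volume a b)
    (h : IsCG q a b u p) (h' : IsCG q a b v p') : IsCG q a b (u + v) (p + p') := by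
  refine ⟨(Polynomial.natDegree_add_le _ _).trans (max_le h.1 h'.1), ?_, ?_, ?_⟩
  · simp [h.2.1, h'.2.1]
  · simp [h.2.2.1, h'.2.2.1]
  · intro w hw
    have e : ∀ x, ((u + v) x - (p + p').eval x) * w.eval x =
      (u x - p.eval x) * w.eval x + (v x - p'.eval x) * w.eval x := by
      intro x; simp; ring
    simp only [e]
    rw [intervalIntegral.integral_add (cg_int_mul (hu.sub (cg_poly_int a b p)) w)
      (cg_int_mul (hv.sub (cg_poly_int a b p')) w), h.2.2.2 w hw, h'.2.2.2 w hw, add_zero]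

lemma IsCG.smul {q : ℕ} {a b : ℝ} {v : ℝ → ℝ} {p : Polynomial ℝ} (c : ℝ)
    (h : IsCG q a b v p) : IsCG q a b (fun x => c * v x) (Polynomial.C c * p) := by
  refine ⟨(Polynomial.natDegree_C_mul_le _ _).trans h.1, ?_, ?_, ?_⟩
  · simp [h.2.1]
  · simp [h.2.2.1]
  · intro w hw
    have e : ∀ x, (c * v x - (Polynomial.C c * p).eval x) * w.eval x =
      c * ((v x - p.eval x) * w.eval x) := by
      intro x; simp; ring
    simp only [e]
    rw [intervalIntegral.integral_const_mul, h.2.2.2 w hw, mul_zero]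

lemma IsCG.self {q : ℕ} (a b : ℝ) {p : Polynomial ℝ} (h : p.natDegree ≤ q) :
    IsCG q a b (fun x => p.eval x) p :=
  ⟨h, rfl, rfl, by intro w _; simp⟩

/-- The degrees of freedom on `[0,1]`. -/
noncomputable def cgDof (q : ℕ) : Polynomial ℝ →ₗ[ℝ] (ℝ × ℝ × (Fin (q - 1) → ℝ)) where
  toFun p := (p.eval 0, p.eval 1, fun j => ∫ x in (0:ℝ)..1, p.eval x * x ^ (j : ℕ))
  map_add' p r := by
    have key : ∀ j : Fin (q - 1), ∫ x in (0:ℝ)..1, (p + r).eval x * x ^ (j : ℕ) =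
        (∫ x in (0:ℝ)..1, p.eval x * x ^ (j : ℕ)) + ∫ x in (0:ℝ)..1, r.eval x * x ^ (j : ℕ) := by
      intro j
      simp only [Polynomial.eval_add, add_mul]
      apply intervalIntegral.integral_add
      · exact (p.continuous.mul (continuous_pow _)).intervalIntegrable _ _
      · exact (r.continuous.mul (continuous_pow _)).intervalIntegrable _ _
    exact Prod.ext Polynomial.eval_add (Prod.ext Polynomial.eval_add (funext key))
  map_smul' c p := by
    have key : ∀ j : Fin (q - 1), ∫ x in (0:ℝ)..1, (c • p).eval x * x ^ (j : ℕ) =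
        c * (∫ x in (0:ℝ)..1, p.eval x * x ^ (j : ℕ)) := by
      intro j
      simp only [Polynomial.eval_smul, smul_eq_mul, mul_assoc]
      exact intervalIntegral.integral_const_mul _ _
    exact Prod.ext (Polynomial.eval_smul ..) (Prod.ext (Polynomial.eval_smul ..) (funext key))

lemma cgDof_inj (q : ℕ) (p : Polynomial ℝ) (hd : p.natDegree ≤ q) (h : cgDof q p = 0) :
    p = 0 := by
  have h1 : p.eval 0 = 0 := congrArg Prod.fst h
  have h2 : p.eval 1 = 0 := congrArg (fun z => z.2.1) h
  have h3 : ∀ j : Fin (q - 1), ∫ x in (0:ℝ)..1, p.eval x * x ^ (j : ℕ) = 0 :=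
    fun j => congrFun (congrArg (fun z => z.2.2) h) j
  apply cg_unique_zero q zero_lt_one p hd h1 h2
  intro w hw
  have e : ∀ x, p.eval x * w.eval x =
      ∑ i ∈ Finset.range (w.natDegree + 1), w.coeff i * (p.eval x * x ^ i) := by
    intro x
    rw [Polynomial.eval_eq_sum_range (p := w), Finset.mul_sum]
    exact Finset.sum_congr rfl fun i _ => by ring
  simp only [e]
  rw [intervalIntegral.integral_finsetSum]
  · apply Finset.sum_eq_zero
    intro i hi
    rw [Finset.mem_range] at hi
    rw [intervalIntegral.integral_const_mul, h3 ⟨i, by omega⟩, mul_zero]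
  · intro i _
    exact ((p.continuous.mul (continuous_pow _)).const_mul _).intervalIntegrable _ _

lemma cg_ref_bound (q : ℕ) : ∃ C : ℝ, 0 < C ∧ ∀ p : Polynomial ℝ, p.natDegree ≤ q →
    ∀ t ∈ Set.Icc (0:ℝ) 1, |p.eval t| ≤ C * ‖cgDof q p‖ := by
  let e := Polynomial.degreeLTEquiv ℝ (q + 1)
  let T : (Fin (q + 1) → ℝ) →ₗ[ℝ] (ℝ × ℝ × (Fin (q - 1) → ℝ)) :=
    (cgDof q).comp ((Polynomial.degreeLT ℝ (q + 1)).subtype.comp e.symm.toLinearMap)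
  have hker : LinearMap.ker T = ⊥ := by
    rw [LinearMap.ker_eq_bot']
    intro c hc
    have hz := cgDof_inj q (e.symm c : Polynomial ℝ) (by
      have := Polynomial.mem_degreeLT.mp (e.symm c).2
      exact Polynomial.natDegree_le_iff_degree_le.mpr (Order.le_of_lt_succ (by exact_mod_cast Polynomial.degree_lt_iff_coeff_zero _ _ |>.mpr (Polynomial.degree_lt_iff_coeff_zero _ _ |>.mp this)))) hc
    have : e.symm c = 0 := Subtype.ext hz
    simpa using this
  obtain ⟨K, hK, hT⟩ := T.exists_antilipschitzWith hker
  refine ⟨(q + 1) * K, by positivity, ?_⟩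
  intro p hp t ht
  have hmem : p ∈ Polynomial.degreeLT ℝ (q + 1) := by
    rw [Polynomial.mem_degreeLT]
    exact lt_of_le_of_lt (Polynomial.natDegree_le_iff_degree_le.mp hp) (by exact_mod_cast Nat.lt_succ_self q)
  have hTe : T (e ⟨p, hmem⟩) = cgDof q p := by simp [T]
  have hn : ‖e ⟨p, hmem⟩‖ ≤ K * ‖cgDof q p‖ := by
    have := hT.le_mul_dist (e ⟨p, hmem⟩) 0
    simpa [dist_zero_right, hTe] using this
  have hc : ∀ i ∈ Finset.range (q + 1), ‖p.coeff i * t ^ i‖ ≤ K * ‖cgDof q p‖ := by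
    intro i hi
    have h1 : ‖p.coeff i‖ ≤ K * ‖cgDof q p‖ :=
      (norm_le_pi_norm (e ⟨p, hmem⟩) ⟨i, Finset.mem_range.mp hi⟩).trans hn
    rw [norm_mul]
    have h2 : ‖t ^ i‖ ≤ 1 := by
      rw [Real.norm_of_nonneg (pow_nonneg ht.1 i)]
      exact pow_le_one₀ ht.1 ht.2
    exact (mul_le_of_le_one_right (norm_nonneg _) h2).trans h1
  rw [Polynomial.eval_eq_sum_range' (Nat.lt_succ_of_le hp), ← Real.norm_eq_abs]
  refine (norm_sum_le_of_le _ hc).trans ?_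
  simp [mul_assoc]

lemma IsCG.dof_le {q : ℕ} {a b : ℝ} (hab : a < b) {v : ℝ → ℝ} {p : Polynomial ℝ}
    (hv : IntervalIntegrable v volume a b) (h : IsCG q a b v p) {M : ℝ}
    (hM : ∀ x ∈ Set.Icc a b, |v x| ≤ M) :
    ‖cgDof q (p.comp (Polynomial.C (b - a) * Polynomial.X + Polynomial.C a))‖ ≤ M := by
  have hM0 : 0 ≤ M := (abs_nonneg _).trans (hM a ⟨le_rfl, hab.le⟩)
  have hba : 0 < b - a := by linarith
  refine max_le ?_ (max_le ?_ ((pi_norm_le_iff_of_nonneg hM0).mpr ?_))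
  · simpa [cgDof, h.2.1] using hM a ⟨le_rfl, hab.le⟩
  · simpa [cgDof, h.2.2.1] using hM b ⟨hab.le, le_rfl⟩
  · intro j
    set w : Polynomial ℝ := (Polynomial.C (b - a)⁻¹ * (Polynomial.X - Polynomial.C a)) ^ (j : ℕ)
      with hw
    have hwd : w.natDegree + 2 ≤ q := by
      have h1 : w.natDegree ≤ j * 1 :=
        Polynomial.natDegree_pow_le_of_le _
          ((Polynomial.natDegree_C_mul_le _ _).trans (Polynomial.natDegree_X_sub_C_le a))
      have := j.2
      omega
    have hwe : ∀ x, w.eval x = ((b - a)⁻¹ * (x - a)) ^ (j : ℕ) := by intro x; simp [hw]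
    have e1 : ∫ t in (0:ℝ)..1,
        (p.comp (Polynomial.C (b - a) * Polynomial.X + Polynomial.C a)).eval t * t ^ (j : ℕ)
        = (b - a)⁻¹ * ∫ x in a..b, v x * w.eval x := by
      rw [← h.orth hv w hwd]
      have := intervalIntegral.integral_comp_mul_add (a := (0:ℝ)) (b := 1)
        (fun x => p.eval x * w.eval x) hba.ne' a
      simp only [mul_zero, zero_add, mul_one, sub_add_cancel, smul_eq_mul] at this
      rw [← this]
      congr 1; ext t
      rw [hwe]
      simp only [Polynomial.eval_comp, Polynomial.eval_add, Polynomial.eval_mul,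
        Polynomial.eval_C, Polynomial.eval_X, add_sub_cancel_right]
      rw [inv_mul_cancel_left₀ hba.ne']
    have e2 : ‖∫ x in a..b, v x * w.eval x‖ ≤ M * |b - a| := by
      apply intervalIntegral.norm_integral_le_of_norm_le_const
      intro x hx
      rw [Set.uIoc_of_le hab.le] at hx
      have hx0 : 0 ≤ (b - a)⁻¹ * (x - a) := mul_nonneg (by positivity) (by linarith [hx.1])
      have hx1 : (b - a)⁻¹ * (x - a) ≤ 1 := by
        rw [inv_mul_le_iff₀ hba]; linarith [hx.2]
      rw [norm_mul, hwe, Real.norm_of_nonneg (pow_nonneg hx0 _)]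
      exact (mul_le_of_le_one_right (norm_nonneg _) (pow_le_one₀ hx0 hx1)).trans
        (hM x ⟨hx.1.le, hx.2⟩)
    change ‖∫ t in (0:ℝ)..1,
        (p.comp (Polynomial.C (b - a) * Polynomial.X + Polynomial.C a)).eval t * t ^ (j : ℕ)‖ ≤ M
    rw [e1, norm_mul, norm_inv, Real.norm_of_nonneg hba.le, inv_mul_le_iff₀ hba, mul_comm]
    rwa [abs_of_pos hba] at e2

/-- Properties of the cG interpolant `π_cG^[q]`: for `q ≥ 1` the map `v ↦ π_cG^[q] v`
(characterized by the interpolation and orthogonality conditions) is linear on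
bounded integrable functions, reproduces polynomials of degree at most `q`, and is
bounded in the maximum norm by a constant `C = C(q) > 0` independent of the
interval `[a,b]`. -/
theorem cG_interpolant_properties (q : ℕ) (hq : 1 ≤ q) :
    ∃ C : ℝ, 0 < C ∧ ∀ (a b : ℝ), a < b →
      ∀ interp : (ℝ → ℝ) → Polynomial ℝ,
        -- `interp` is the interpolant `π_cG^[q]` on `[a,b]`:
        (∀ v : ℝ → ℝ, IntervalIntegrable v volume a b →
            (∃ M : ℝ, ∀ x ∈ Set.Icc a b, |v x| ≤ M) →
            (interp v).natDegree ≤ q ∧ (interp v).eval a = v a ∧ (interp v).eval b = v b ∧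
            ∀ w : Polynomial ℝ, w.natDegree + 2 ≤ q →
              (∫ x in a..b, (v x - (interp v).eval x) * w.eval x) = 0) →
        -- linearity (additivity and homogeneity) on bounded integrable functions
        ((∀ u v : ℝ → ℝ, IntervalIntegrable u volume a b →
            (∃ M : ℝ, ∀ x ∈ Set.Icc a b, |u x| ≤ M) →
            IntervalIntegrable v volume a b →
            (∃ M : ℝ, ∀ x ∈ Set.Icc a b, |v x| ≤ M) →
            interp (u + v) = interp u + interp v) ∧
         (∀ (c : ℝ) (v : ℝ → ℝ), IntervalIntegrable v volume a b →
            (∃ M : ℝ, ∀ x ∈ Set.Icc a b, |v x| ≤ M) →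
            interp (fun x => c * v x) = Polynomial.C c * interp v) ∧
         -- exactness on polynomials of degree at most q
         (∀ p : Polynomial ℝ, p.natDegree ≤ q → interp (fun x => p.eval x) = p) ∧
         -- boundedness: ‖π_cG v‖_{L∞} ≤ C ‖v‖_{L∞}
         (∀ v : ℝ → ℝ, IntervalIntegrable v volume a b →
            (∃ M : ℝ, ∀ x ∈ Set.Icc a b, |v x| ≤ M) →
            ∀ M : ℝ, (∀ x ∈ Set.Icc a b, |v x| ≤ M) →
              ∀ x ∈ Set.Icc a b, |(interp v).eval x| ≤ C * M)) := by
  obtain ⟨C, hC, hB⟩ := cg_ref_bound q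
  refine ⟨C, hC, ?_⟩
  intro a b hab interp hI
  have bdd_mul : ∀ (c : ℝ) (v : ℝ → ℝ), (∃ M : ℝ, ∀ x ∈ Set.Icc a b, |v x| ≤ M) →
      ∃ M : ℝ, ∀ x ∈ Set.Icc a b, |c * v x| ≤ M := by
    rintro c v ⟨M, hM⟩
    exact ⟨|c| * M, fun x hx => by
      rw [abs_mul]; exact mul_le_mul_of_nonneg_left (hM x hx) (abs_nonneg c)⟩
  refine ⟨?_, ?_, ?_, ?_⟩
  · intro u v hu hub hv hvb
    have huvb : ∃ M : ℝ, ∀ x ∈ Set.Icc a b, |(u + v) x| ≤ M := by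
      obtain ⟨M, hM⟩ := hub
      obtain ⟨N, hN⟩ := hvb
      exact ⟨M + N, fun x hx => (abs_add_le _ _).trans (add_le_add (hM x hx) (hN x hx))⟩
    exact IsCG.unique (q := q) hab (hu.add hv) (hI _ (hu.add hv) huvb)
      (IsCG.add hu hv (hI u hu hub) (hI v hv hvb))
  · intro c v hv hvb
    exact IsCG.unique (q := q) hab (hv.const_mul c) (hI _ (hv.const_mul c) (bdd_mul c v hvb))
      (IsCG.smul c (hI v hv hvb))
  · intro p hp
    have hpb : ∃ M : ℝ, ∀ x ∈ Set.Icc a b, |p.eval x| ≤ M :=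
      isCompact_Icc.exists_bound_of_continuousOn p.continuous.continuousOn
    exact IsCG.unique (q := q) hab (cg_poly_int a b p) (hI _ (cg_poly_int a b p) hpb)
      (IsCG.self a b hp)
  · intro v hv hvb M hM x hx
    have hcg : IsCG q a b v (interp v) := hI v hv hvb
    have hba : 0 < b - a := by linarith
    have hd : ((interp v).comp
        (Polynomial.C (b - a) * Polynomial.X + Polynomial.C a)).natDegree ≤ q := by
      refine Polynomial.natDegree_comp_le.trans ?_
      have h1 := Polynomial.natDegree_linear_le (a := b - a) (b := a)
      calc _ ≤ (interp v).natDegree * 1 := Nat.mul_le_mul_left _ h1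
        _ ≤ q := by rw [mul_one]; exact hcg.1
    have := hB _ hd ((b - a)⁻¹ * (x - a)) ⟨mul_nonneg (by positivity) (by linarith [hx.1]), by
      rw [inv_mul_le_iff₀ hba]; linarith [hx.2]⟩
    simp only [Polynomial.eval_comp, Polynomial.eval_add, Polynomial.eval_mul,
      Polynomial.eval_C, Polynomial.eval_X] at this
    rw [mul_inv_cancel_left₀ hba.ne', sub_add_cancel] at this
    exact this.trans (mul_le_mul_of_nonneg_left (hcg.dof_le hab hv hM) hC.le)
end

section
/- For every integer q ≥ 0, the map v ↦ π_dG^[q] v on bounded integrable functions on [a,b] is linear, satisfies π_dG^[q] v = v whenever v is a polynomial of degree at most q, and there is a constant C = C(q) > 0, independent of the interval [a,b], such that ‖π_dG^[q] v‖_{L∞([a,b])} ≤ C·‖v‖_{L∞([a,b])} for every bounded integrable v : [a,b] → ℝ. -/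
open MeasureTheory

lemma dG_uniq (q : ℕ) (a b : ℝ) (hab : a < b) (p : Polynomial ℝ) (hd : p.natDegree ≤ q)
    (hb : p.eval b = 0)
    (ho : ∀ w : Polynomial ℝ, w.natDegree + 1 ≤ q → (∫ x in a..b, p.eval x * w.eval x) = 0) :
    p = 0 := by
  by_contra hp
  obtain ⟨r, rfl⟩ := Polynomial.dvd_iff_isRoot.mpr hb
  have hr : r ≠ 0 := right_ne_zero_of_mul hp
  rw [Polynomial.natDegree_mul (Polynomial.X_sub_C_ne_zero b) hr,
    Polynomial.natDegree_X_sub_C] at hd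
  have h := ho r (by omega)
  have hpos : 0 < ∫ x in a..b, (b - x) * (r.eval x) ^ 2 := by
    have hfin : ∃ c ∈ Set.Ioo a b, r.eval c ≠ 0 := by
      by_contra! hc
      apply hr
      apply Polynomial.eq_zero_of_infinite_isRoot
      exact (Set.Ioo_infinite hab).mono hc
    obtain ⟨c, hc, hc0⟩ := hfin
    refine intervalIntegral.integral_pos hab (by fun_prop) ?_ ⟨c, ⟨hc.1.le, hc.2.le⟩, ?_⟩
    · intro x hx
      exact mul_nonneg (by linarith [hx.2]) (sq_nonneg _)
    · have : 0 < b - c := by linarith [hc.2]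
      positivity
  have : (∫ x in a..b, (b - x) * (r.eval x) ^ 2) =
      - ∫ x in a..b, ((Polynomial.X - Polynomial.C b) * r).eval x * r.eval x := by
    rw [← intervalIntegral.integral_neg]
    congr 1
    ext x
    simp
    ring
  rw [this, h] at hpos
  simp at hpos

/-- moment functional -/
noncomputable def dGmom (j : ℕ) : Polynomial ℝ →ₗ[ℝ] ℝ where
  toFun p := ∫ x in (0:ℝ)..1, p.eval x * x ^ j
  map_add' p r := by
    rw [← intervalIntegral.integral_add]
    · congr 1
      ext x
      simp
      ring
    · exact Continuous.intervalIntegrable (by fun_prop) _ _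
    · exact Continuous.intervalIntegrable (by fun_prop) _ _
  map_smul' c p := by
    simp only [RingHom.id_apply, smul_eq_mul]
    rw [← intervalIntegral.integral_const_mul]
    congr 1
    ext x
    simp
    ring

noncomputable def dGpoly (q : ℕ) : (Fin (q+1) → ℝ) →ₗ[ℝ] Polynomial ℝ :=
  ∑ i : Fin (q+1), (Polynomial.monomial (i : ℕ)) ∘ₗ LinearMap.proj i

lemma dGpoly_apply (q : ℕ) (c : Fin (q+1) → ℝ) :
    dGpoly q c = ∑ i : Fin (q+1), Polynomial.monomial (i : ℕ) (c i) := by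
  simp [dGpoly]

lemma dGpoly_coeff (q : ℕ) (p : Polynomial ℝ) (hp : p.natDegree ≤ q) :
    dGpoly q (fun i => p.coeff i) = p := by
  rw [dGpoly_apply, Fin.sum_univ_eq_sum_range (fun i => Polynomial.monomial i (p.coeff i))]
  exact (p.as_sum_range' (q+1) (by omega)).symm

lemma dGpoly_natDegree (q : ℕ) (c : Fin (q+1) → ℝ) : (dGpoly q c).natDegree ≤ q := by
  rw [dGpoly_apply]
  apply Polynomial.natDegree_sum_le_of_forall_le
  intro i _
  exact (Polynomial.natDegree_monomial_le _).trans (by omega)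

lemma dGpoly_inj (q : ℕ) (c : Fin (q+1) → ℝ) (h : dGpoly q c = 0) : c = 0 := by
  ext i
  have := congrArg (fun p => Polynomial.coeff p (i : ℕ)) h
  simpa [dGpoly_apply, Polynomial.finset_sum_coeff, Polynomial.coeff_monomial,
    Fin.val_inj] using this

noncomputable def dGT (q : ℕ) : (Fin (q+1) → ℝ) →ₗ[ℝ] (ℝ × (Fin q → ℝ)) :=
  ((Polynomial.leval (1:ℝ)) ∘ₗ dGpoly q).prod
    (LinearMap.pi fun j : Fin q => dGmom j ∘ₗ dGpoly q)

lemma dGT_ker (q : ℕ) : LinearMap.ker (dGT q) = ⊥ := by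
  rw [LinearMap.ker_eq_bot']
  intro c hc
  have h1 : (dGpoly q c).eval 1 = 0 := by
    simpa [dGT] using congrArg Prod.fst hc
  have h2 : ∀ j : Fin q, dGmom j (dGpoly q c) = 0 := by
    intro j
    simpa [dGT] using congrFun (congrArg Prod.snd hc) j
  apply dGpoly_inj
  refine dG_uniq q 0 1 one_pos _ (dGpoly_natDegree q c) h1 ?_
  intro w hw
  have : ∀ x : ℝ, (dGpoly q c).eval x * w.eval x =
      ∑ i ∈ Finset.range q, w.coeff i * ((dGpoly q c).eval x * x ^ i) := by
    intro x
    rw [Polynomial.eval_eq_sum_range' (show w.natDegree < q by omega), Finset.mul_sum]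
    exact Finset.sum_congr rfl fun i _ => by ring
  simp_rw [this]
  rw [intervalIntegral.integral_finset_sum]
  · apply Finset.sum_eq_zero
    intro i hi
    rw [intervalIntegral.integral_const_mul]
    have := h2 ⟨i, Finset.mem_range.mp hi⟩
    simp only [dGmom, LinearMap.coe_mk, AddHom.coe_mk] at this
    rw [this, mul_zero]
  · intro i _
    exact Continuous.intervalIntegrable (by fun_prop) _ _

lemma dG_bound (q : ℕ) : ∃ K : ℝ, 0 < K ∧ ∀ P : Polynomial ℝ, P.natDegree ≤ q → ∀ M : ℝ,
    |P.eval 1| ≤ M → (∀ j < q, |∫ x in (0:ℝ)..1, P.eval x * x ^ j| ≤ M) →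
    ∀ x ∈ Set.Icc (0:ℝ) 1, |P.eval x| ≤ K * M := by
  obtain ⟨K, hK, hT⟩ := (dGT q).exists_antilipschitzWith (dGT_ker q)
  refine ⟨(q+1) * K, by positivity, ?_⟩
  intro P hP M h1 hj x hx
  have hM : 0 ≤ M := (abs_nonneg _).trans h1
  set c : Fin (q+1) → ℝ := fun i => P.coeff i with hc
  have hcP : dGpoly q c = P := dGpoly_coeff q P hP
  have hTc : ‖dGT q c‖ ≤ M := by
    rw [Prod.norm_def]
    apply max_le
    · simpa [dGT, hcP] using h1
    · rw [pi_norm_le_iff_of_nonneg hM]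
      intro j
      simpa [dGT, hcP, dGmom] using hj j j.2
  have hcn : ‖c‖ ≤ K * M := by
    have := hT.le_mul_dist c 0
    rw [map_zero, dist_zero_right, dist_zero_right] at this
    exact this.trans (by gcongr)
  rw [Polynomial.eval_eq_sum_range' (show P.natDegree < q+1 by omega)]
  calc |∑ i ∈ Finset.range (q+1), P.coeff i * x ^ i|
      ≤ ∑ i ∈ Finset.range (q+1), |P.coeff i * x ^ i| := Finset.abs_sum_le_sum_abs _ _
    _ ≤ ∑ i ∈ Finset.range (q+1), K * M := by
        apply Finset.sum_le_sum
        intro i hi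
        rw [abs_mul, abs_pow, abs_of_nonneg hx.1]
        have h3 : |P.coeff i| ≤ ‖c‖ := norm_le_pi_norm c ⟨i, Finset.mem_range.mp hi⟩
        have h4 : x ^ i ≤ 1 := pow_le_one₀ hx.1 hx.2
        calc |P.coeff i| * x ^ i ≤ |P.coeff i| * 1 := by gcongr
          _ ≤ K * M := by linarith
    _ = (q+1) * K * M := by simp; ring

lemma dG_mul_int (a b : ℝ) (v : ℝ → ℝ) (hv : IntervalIntegrable v volume a b)
    (w : Polynomial ℝ) : IntervalIntegrable (fun x => v x * w.eval x) volume a b :=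
  hv.mul_continuousOn (by fun_prop)

lemma dG_eq (q : ℕ) (a b : ℝ) (hab : a < b) (v : ℝ → ℝ) (hv : IntervalIntegrable v volume a b)
    (p r : Polynomial ℝ) (hp : p.natDegree ≤ q) (hr : r.natDegree ≤ q)
    (hpb : p.eval b = v b) (hrb : r.eval b = v b)
    (hpo : ∀ w : Polynomial ℝ, w.natDegree + 1 ≤ q →
              (∫ x in a..b, (v x - p.eval x) * w.eval x) = 0)
    (hro : ∀ w : Polynomial ℝ, w.natDegree + 1 ≤ q →
              (∫ x in a..b, (v x - r.eval x) * w.eval x) = 0) : p = r := by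
  have hI : ∀ p : Polynomial ℝ, IntervalIntegrable (fun x => p.eval x) volume a b :=
    fun p => Continuous.intervalIntegrable (by fun_prop) _ _
  rw [← sub_eq_zero]
  refine dG_uniq q a b hab _ ((Polynomial.natDegree_sub_le _ _).trans (max_le hp hr))
    (by simp [hpb, hrb]) ?_
  intro w hw
  have : ∀ x, (p - r).eval x * w.eval x =
      (v x - r.eval x) * w.eval x - (v x - p.eval x) * w.eval x := by
    intro x
    simp
    ring
  simp_rw [this]
  rw [intervalIntegral.integral_sub (dG_mul_int a b _ (hv.sub (hI r)) w)
    (dG_mul_int a b _ (hv.sub (hI p)) w), hpo w hw, hro w hw, sub_zero]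

/-- Properties of the dG interpolant `π_dG^[q]`: for `q ≥ 0` the map `v ↦ π_dG^[q] v`
(characterized by the interpolation and orthogonality conditions) is linear on
bounded integrable functions, reproduces polynomials of degree at most `q`, and is
bounded in the maximum norm by a constant `C = C(q) > 0` independent of the
interval `[a,b]`. -/
theorem dG_interpolant_properties (q : ℕ) :
    ∃ C : ℝ, 0 < C ∧ ∀ (a b : ℝ), a < b →
      ∀ interp : (ℝ → ℝ) → Polynomial ℝ,
        -- `interp` is the interpolant `π_dG^[q]` on `[a,b]`:
        (∀ v : ℝ → ℝ, IntervalIntegrable v volume a b →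
            (∃ M : ℝ, ∀ x ∈ Set.Icc a b, |v x| ≤ M) →
            (interp v).natDegree ≤ q ∧ (interp v).eval b = v b ∧
            ∀ w : Polynomial ℝ, w.natDegree + 1 ≤ q →
              (∫ x in a..b, (v x - (interp v).eval x) * w.eval x) = 0) →
        -- linearity (additivity and homogeneity) on bounded integrable functions
        ((∀ u v : ℝ → ℝ, IntervalIntegrable u volume a b →
            (∃ M : ℝ, ∀ x ∈ Set.Icc a b, |u x| ≤ M) →
            IntervalIntegrable v volume a b →
            (∃ M : ℝ, ∀ x ∈ Set.Icc a b, |v x| ≤ M) →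
            interp (u + v) = interp u + interp v) ∧
         (∀ (c : ℝ) (v : ℝ → ℝ), IntervalIntegrable v volume a b →
            (∃ M : ℝ, ∀ x ∈ Set.Icc a b, |v x| ≤ M) →
            interp (fun x => c * v x) = Polynomial.C c * interp v) ∧
         -- exactness on polynomials of degree at most q
         (∀ p : Polynomial ℝ, p.natDegree ≤ q → interp (fun x => p.eval x) = p) ∧
         -- boundedness: ‖π_dG v‖_{L∞} ≤ C ‖v‖_{L∞}
         (∀ v : ℝ → ℝ, IntervalIntegrable v volume a b →
            (∃ M : ℝ, ∀ x ∈ Set.Icc a b, |v x| ≤ M) →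
            ∀ M : ℝ, (∀ x ∈ Set.Icc a b, |v x| ≤ M) →
              ∀ x ∈ Set.Icc a b, |(interp v).eval x| ≤ C * M)) := by
  obtain ⟨K, hK, hB⟩ := dG_bound q
  refine ⟨K, hK, ?_⟩
  intro a b hab interp H
  have hI : ∀ p : Polynomial ℝ, IntervalIntegrable (fun x => p.eval x) volume a b :=
    fun p => Continuous.intervalIntegrable (by fun_prop) _ _
  refine ⟨?_, ?_, ?_, ?_⟩
  · rintro u v hu ⟨A, hA⟩ hv ⟨B, hB'⟩
    obtain ⟨u1, u2, u3⟩ := H u hu ⟨A, hA⟩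
    obtain ⟨v1, v2, v3⟩ := H v hv ⟨B, hB'⟩
    obtain ⟨s1, s2, s3⟩ := H (u + v) (hu.add hv) ⟨A + B, fun x hx =>
      (abs_add_le _ _).trans (add_le_add (hA x hx) (hB' x hx))⟩
    refine dG_eq q a b hab (u + v) (hu.add hv) _ _ s1
      ((Polynomial.natDegree_add_le _ _).trans (max_le u1 v1)) s2 (by simp [u2, v2]) s3 ?_
    intro w hw
    have : ∀ x, ((u + v) x - (interp u + interp v).eval x) * w.eval x =
        (u x - (interp u).eval x) * w.eval x + (v x - (interp v).eval x) * w.eval x := by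
      intro x
      simp
      ring
    simp_rw [this]
    rw [intervalIntegral.integral_add (dG_mul_int a b _ (hu.sub (hI _)) w)
      (dG_mul_int a b _ (hv.sub (hI _)) w), u3 w hw, v3 w hw, add_zero]
  · rintro c v hv ⟨B, hB'⟩
    obtain ⟨v1, v2, v3⟩ := H v hv ⟨B, hB'⟩
    obtain ⟨s1, s2, s3⟩ := H (fun x => c * v x) (hv.const_mul c) ⟨|c| * B, fun x hx => by
      rw [abs_mul]
      exact mul_le_mul_of_nonneg_left (hB' x hx) (abs_nonneg c)⟩
    refine dG_eq q a b hab (fun x => c * v x) (hv.const_mul c) _ _ s1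
      ((Polynomial.natDegree_C_mul_le _ _).trans v1) s2 (by simp [v2]) s3 ?_
    intro w hw
    have : ∀ x, (c * v x - (Polynomial.C c * interp v).eval x) * w.eval x =
        c * ((v x - (interp v).eval x) * w.eval x) := by
      intro x
      simp
      ring
    simp_rw [this]
    rw [intervalIntegral.integral_const_mul, v3 w hw, mul_zero]
  · intro p hp
    have hbd : ∃ M : ℝ, ∀ x ∈ Set.Icc a b, |p.eval x| ≤ M :=
      isCompact_Icc.exists_bound_of_continuousOn (f := fun x => p.eval x) (by fun_prop)
    obtain ⟨s1, s2, s3⟩ := H (fun x => p.eval x) (hI p) hbd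
    exact dG_eq q a b hab _ (hI p) _ _ s1 hp s2 rfl s3 (by simp)
  · intro v hv hbd M hM x hx
    obtain ⟨s1, s2, s3⟩ := H v hv hbd
    have hba : 0 < b - a := sub_pos.mpr hab
    have hne : b - a ≠ 0 := hba.ne'
    set L : Polynomial ℝ := Polynomial.C (b - a) * Polynomial.X + Polynomial.C a with hL
    have hLe : ∀ t, L.eval t = (b - a) * t + a := by intro t; simp [hL]
    have key := hB ((interp v).comp L) ?_ M ?_ ?_ ((x - a) / (b - a)) ?_
    · rwa [Polynomial.eval_comp, hLe, mul_div_cancel₀ _ hne, sub_add_cancel] at key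
    · rw [Polynomial.natDegree_comp]
      have : L.natDegree ≤ 1 := Polynomial.natDegree_linear_le
      calc _ ≤ (interp v).natDegree * 1 := Nat.mul_le_mul_left _ this
        _ ≤ q := by omega
    · rw [Polynomial.eval_comp, hLe, mul_one, sub_add_cancel, s2]
      exact hM b ⟨hab.le, le_rfl⟩
    · intro j hj
      set w : Polynomial ℝ :=
        (Polynomial.C (b - a)⁻¹ * Polynomial.X + Polynomial.C (-(b - a)⁻¹ * a)) ^ j with hw
      have hwe : ∀ y, w.eval y = ((y - a) / (b - a)) ^ j := by
        intro y
        simp only [hw, Polynomial.eval_pow, Polynomial.eval_add, Polynomial.eval_mul,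
          Polynomial.eval_C, Polynomial.eval_X]
        congr 1
        field_simp
        ring
      have hwd : w.natDegree + 1 ≤ q := by
        have := Polynomial.natDegree_pow_le_of_le j
          (Polynomial.natDegree_linear_le (a := (b - a)⁻¹) (b := -(b - a)⁻¹ * a))
        rw [← hw] at this
        omega
      have h1 : (∫ t in (0:ℝ)..1, ((interp v).comp L).eval t * t ^ j) =
          (b - a)⁻¹ * ∫ y in a..b, (interp v).eval y * w.eval y := by
        have := intervalIntegral.integral_comp_mul_add (a := 0) (b := 1)
          (fun y => (interp v).eval y * w.eval y) hne a
        simp only [mul_zero, zero_add, mul_one, sub_add_cancel, smul_eq_mul] at this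
        rw [← this]
        congr 1
        ext t
        rw [Polynomial.eval_comp, hLe, hwe, add_sub_cancel_right, mul_div_cancel_left₀ _ hne]
      have h2 : (∫ y in a..b, (interp v).eval y * w.eval y) = ∫ y in a..b, v y * w.eval y := by
        have h3 := s3 w hwd
        simp_rw [sub_mul] at h3
        rw [intervalIntegral.integral_sub (dG_mul_int a b _ hv w)
          (dG_mul_int a b _ (hI _) w)] at h3
        linarith
      have h4 : |∫ y in a..b, v y * w.eval y| ≤ M * |b - a| := by
        apply intervalIntegral.norm_integral_le_of_norm_le_const (f := fun y => v y * w.eval y)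
        intro y hy
        rw [Set.uIoc_of_le hab.le] at hy
        have hvy := hM y ⟨hy.1.le, hy.2⟩
        have h0 : 0 ≤ (y - a) / (b - a) := div_nonneg (by linarith [hy.1]) hba.le
        have h5 : (y - a) / (b - a) ≤ 1 := (div_le_one hba).mpr (by linarith [hy.2])
        rw [Real.norm_eq_abs, abs_mul, hwe, abs_pow, abs_of_nonneg h0]
        calc |v y| * ((y - a) / (b - a)) ^ j ≤ |v y| * 1 := by
              gcongr
              exact pow_le_one₀ h0 h5
          _ ≤ M := by linarith
      rw [h1, h2, abs_mul, abs_inv, abs_of_pos hba]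
      rw [abs_of_pos hba] at h4
      rw [inv_mul_le_iff₀ hba]
      linarith
    · exact ⟨div_nonneg (by linarith [hx.1]) hba.le, (div_le_one hba).mpr (by linarith [hx.2])⟩
end

section
/- Let q ≥ 0 be an integer, Λ > 0, and let π be a linear operator mapping bounded integrable functions on [a,b] into polynomials of degree at most q with ‖πv‖_{L∞([a,b])} ≤ Λ·‖v‖_{L∞([a,b])} for all bounded integrable v and πv = v for every polynomial v of degree at most q. Then there is a constant C = C(q,Λ) > 0 such that for every v : [a,b] → ℝ that is piecewise C^{q+1} with discontinuities at a < x_1 < ⋯ < x_n < b, one has ‖(πv)^{(p)} − v^{(p)}‖ ≤ C·k^{r+1−p}·‖v^{(r+1)}‖ + C·Σ_{j=1}^{n} Σ_{m=0}^{r} k^{m−p}·|[v^{(m)}]_{x_j}| for all p = 0,…,r+1 and r = 0,…,q. -/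
open Polynomial in
lemma pie_iterate_comp (Q : ℝ[X]) (k a : ℝ) (p : ℕ) :
    derivative^[p] (Q.comp (C k * X + C a)) = C (k ^ p) * (derivative^[p] Q).comp (C k * X + C a) := by
  induction p with
  | zero => simp
  | succ p ih =>
    rw [Function.iterate_succ_apply', ih, Function.iterate_succ_apply']
    simp only [derivative_mul, derivative_C, derivative_comp, derivative_add, derivative_X, map_pow]
    ring_nf
    simp

open Polynomial in
lemma pie_inverse_unit (q : ℕ) : ∃ K : ℝ, 0 < K ∧ ∀ Q : ℝ[X], Q.natDegree ≤ q → ∀ M : ℝ,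
    (∀ x ∈ Set.Icc (0:ℝ) 1, |Q.eval x| ≤ M) → ∀ p ≤ q + 1, ∀ s ∈ Set.Icc (0:ℝ) 1,
    |(derivative^[p] Q).eval s| ≤ K * M := by
  set w : ℕ → ℝ := fun i => (i : ℝ) / (q + 1) with hw
  have hq : (0:ℝ) < q + 1 := by positivity
  have hinj : Set.InjOn w (Finset.range (q+1) : Set ℕ) := by
    intro i _ j _ h
    simp only [hw] at h
    field_simp at h
    exact_mod_cast h
  have hbd : ∀ (p i : ℕ), ∃ K : ℝ, ∀ s ∈ Set.Icc (0:ℝ) 1,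
      |(derivative^[p] (Lagrange.basis (Finset.range (q+1)) w i)).eval s| ≤ K := by
    intro p i
    obtain ⟨K, hK⟩ := (isCompact_Icc (a := (0:ℝ)) (b := 1)).exists_bound_of_continuousOn
      (derivative^[p] (Lagrange.basis (Finset.range (q+1)) w i)).continuous.continuousOn
    exact ⟨K, fun s hs => by simpa using hK s hs⟩
  choose K hK using hbd
  have hK0 : ∀ p i, 0 ≤ K p i := fun p i =>
    (abs_nonneg _).trans (hK p i 0 (by simp))
  refine ⟨(∑ p ∈ Finset.range (q+2), ∑ i ∈ Finset.range (q+1), K p i) + 1, ?_, ?_⟩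
  · have : 0 ≤ ∑ p ∈ Finset.range (q+2), ∑ i ∈ Finset.range (q+1), K p i :=
      Finset.sum_nonneg fun p _ => Finset.sum_nonneg fun i _ => hK0 p i
    linarith
  intro Q hQ M hM p hp s hs
  have hM0 : 0 ≤ M := (abs_nonneg _).trans (hM 0 (by simp))
  have hdeg : Q.degree < ((Finset.range (q+1)).card : WithBot ℕ) := by
    rw [Finset.card_range]
    exact lt_of_le_of_lt degree_le_natDegree (by exact_mod_cast Nat.lt_succ_of_le hQ)
  have hQe := Lagrange.eq_interpolate hinj hdeg
  rw [Lagrange.interpolate_apply] at hQe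
  have h1 : (derivative^[p] Q).eval s = ∑ i ∈ Finset.range (q+1), Q.eval (w i) *
      (derivative^[p] (Lagrange.basis (Finset.range (q+1)) w i)).eval s := by
    conv_lhs => rw [hQe]
    rw [iterate_derivative_sum, eval_finsetSum]
    refine Finset.sum_congr rfl fun i _ => ?_
    rw [iterate_derivative_C_mul, eval_mul, eval_C]
  rw [h1]
  calc _ ≤ ∑ i ∈ Finset.range (q+1), |Q.eval (w i) *
      (derivative^[p] (Lagrange.basis (Finset.range (q+1)) w i)).eval s| :=
        Finset.abs_sum_le_sum_abs _ _
    _ ≤ ∑ i ∈ Finset.range (q+1), K p i * M := by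
        refine Finset.sum_le_sum fun i hi => ?_
        rw [abs_mul, mul_comm]
        refine mul_le_mul (hK p i s hs) (hM _ ⟨by simp only [hw]; positivity, ?_⟩)
          (abs_nonneg _) (hK0 p i)
        simp only [hw]
        rw [div_le_one hq]
        have : i ≤ q + 1 := (Finset.mem_range.mp hi).le
        exact_mod_cast this
    _ = (∑ i ∈ Finset.range (q+1), K p i) * M := by rw [Finset.sum_mul]
    _ ≤ _ := by
        refine mul_le_mul_of_nonneg_right ?_ hM0
        have := Finset.single_le_sum (f := fun p => ∑ i ∈ Finset.range (q+1), K p i)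
          (fun p _ => Finset.sum_nonneg fun i _ => hK0 p i) (Finset.mem_range.mpr (Nat.lt_succ_of_le hp))
        linarith

open Polynomial in
lemma pie_inverse (q : ℕ) : ∃ K : ℝ, 0 < K ∧ ∀ a b : ℝ, a < b → ∀ Q : ℝ[X], Q.natDegree ≤ q →
    ∀ M : ℝ, (∀ x ∈ Set.Icc a b, |Q.eval x| ≤ M) → ∀ p ≤ q + 1, ∀ s ∈ Set.Icc a b,
    (b - a) ^ p * |(derivative^[p] Q).eval s| ≤ K * M := by
  obtain ⟨K, hK, h⟩ := pie_inverse_unit q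
  refine ⟨K, hK, fun a b hab Q hQ M hM p hp s hs => ?_⟩
  have hk : 0 < b - a := by linarith
  have := h (Q.comp (C (b-a) * X + C a)) ?_ M ?_ p hp ((s - a) / (b - a)) ?_
  · rw [pie_iterate_comp] at this
    simp only [eval_mul, eval_C, eval_comp, eval_add, eval_X, abs_mul, abs_pow, abs_of_pos hk] at this
    rwa [mul_div_cancel₀ _ hk.ne', sub_add_cancel] at this
  · rw [natDegree_comp, natDegree_linear hk.ne', mul_one]; exact hQ
  · intro x hx
    simp only [eval_mul, eval_C, eval_comp, eval_add, eval_X]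
    exact hM _ ⟨by nlinarith [hx.1, hx.2], by nlinarith [hx.1, hx.2]⟩
  · exact ⟨div_nonneg (by linarith [hs.1]) hk.le, by rw [div_le_one hk]; linarith [hs.2]⟩

lemma pie_step (n : ℕ) (y : ℕ → ℝ) (F F' : ℕ → ℝ → ℝ) (B : ℝ)
    (hy : ∀ j ≤ n, y j < y (j + 1))
    (hF : ∀ j ≤ n, ∀ x, HasDerivAt (F j) (F' j x) x)
    (hB : ∀ j ≤ n, ∀ s ∈ Set.Icc (y j) (y (j + 1)), |F' j s| ≤ B)
    (h0 : F 0 (y 0) = 0) (j : ℕ) (hj : j ≤ n) : ∀ s ∈ Set.Icc (y j) (y (j + 1)),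
      |F j s| ≤ ∑ i ∈ Finset.Icc 1 j, |F i (y i) - F (i - 1) (y i)| + B * (s - y 0) := by
  have mv : ∀ j ≤ n, ∀ s ∈ Set.Icc (y j) (y (j + 1)), |F j s - F j (y j)| ≤ B * (s - y j) := by
    intro j hj
    exact norm_image_sub_le_of_norm_deriv_le_segment' (f' := F' j)
      (fun x _ => (hF j hj x).hasDerivWithinAt)
      (fun x hx => hB j hj x ⟨hx.1, hx.2.le⟩)
  induction j with
  | zero =>
    intro s hs
    have := mv 0 hj s hs
    rw [h0] at this
    simpa using this
  | succ j ih =>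
    intro s hs
    have h1 := mv (j+1) hj s hs
    have h2 := ih (by omega) (y (j+1)) ⟨(hy j (by omega)).le, le_rfl⟩
    rw [Finset.sum_Icc_succ_top (by omega)]
    simp only [Nat.add_sub_cancel]
    have e : F (j+1) s = (F (j+1) s - F (j+1) (y (j+1))) + (F (j+1) (y (j+1)) - F j (y (j+1)))
      + F j (y (j+1)) := by ring
    rw [e]
    refine (abs_add_three _ _ _).trans ?_
    nlinarith

lemma pie_locate (n : ℕ) (y : ℕ → ℝ) (x : ℝ) (h0 : y 0 ≤ x) (h1 : x ≤ y (n + 1)) :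
    ∃ j ≤ n, x ∈ Set.Icc (y j) (y (j + 1)) := by
  induction n with
  | zero => exact ⟨0, le_rfl, h0, h1⟩
  | succ n ih =>
    by_cases h : x ≤ y (n + 1)
    · obtain ⟨j, hj, hx⟩ := ih h
      exact ⟨j, by omega, hx⟩
    · exact ⟨n + 1, le_rfl, (not_le.mp h).le, h1⟩

open Polynomial in
lemma pie_taylor (r : ℕ) (a : ℝ) (c : ℕ → ℝ) : ∃ P : ℝ[X], P.natDegree ≤ r ∧
    ∀ m ≤ r, (derivative^[m] P).eval a = c m := by
  set S : ℝ[X] := ∑ i ∈ Finset.range (r+1), monomial i (c i / (i.factorial : ℝ)) with hS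
  refine ⟨taylor (-a) S, ?_, ?_⟩
  · rw [natDegree_taylor]
    refine natDegree_sum_le_of_forall_le _ _ fun i hi => ?_
    exact (natDegree_monomial_le _).trans (Nat.lt_succ_iff.mp (Finset.mem_range.mp hi))
  · intro m hm
    have h := taylor_coeff (R := ℝ) (r := a) (f := taylor (-a) S) m
    rw [taylor_taylor, add_neg_cancel, taylor_zero] at h
    have hc : S.coeff m = c m / (m.factorial : ℝ) := by
      rw [hS, finsetSum_coeff]
      simp only [coeff_monomial]
      rw [Finset.sum_ite_eq' ]
      simp [Nat.lt_succ_of_le hm]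
    rw [← factorial_smul_hasseDeriv]
    rw [LinearMap.smul_apply, eval_smul, nsmul_eq_mul, ← h, hc]
    have : (m.factorial : ℝ) ≠ 0 := by exact_mod_cast m.factorial_ne_zero
    field_simp



open MeasureTheory

/-- Interpolation estimate for piecewise smooth functions (Lemma 5.2):
if `interp` is a linear interpolation operator into polynomials of degree at most `q`,
bounded by `Λ` and exact on polynomials of degree at most `q`, then there is
`C = C(q,Λ) > 0` such that for every `v : [a,b] → ℝ` which is piecewise `C^{q+1}`
with discontinuities at `a < x₁ < ⋯ < xₙ < b` (the pieces being given by globally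
`C^{q+1}` functions `g 0, …, g n`, with the value of `v` at an interior node equal to
one of its one-sided limits), one has, for `p = 0, …, r+1` and `r = 0, …, q`,
`‖(interp v)^{(p)} - v^{(p)}‖ ≤ C k^{r+1-p} ‖v^{(r+1)}‖ + C ∑_{j=1}^{n} ∑_{m=0}^{r} k^{m-p} |[v^{(m)}]_{x_j}|`,
where `k = b - a` and the jumps are `[v^{(m)}]_{x_j} = g_j^{(m)}(x_j) - g_{j-1}^{(m)}(x_j)`. -/
theorem piecewise_interpolation_estimate (q : ℕ) (Λ : ℝ) (hΛ : 0 < Λ) :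
    ∃ C : ℝ, 0 < C ∧ ∀ (a b : ℝ), a < b →
      ∀ interp : (ℝ → ℝ) → Polynomial ℝ,
        (∀ v : ℝ → ℝ, IntervalIntegrable v volume a b →
            (∃ M : ℝ, ∀ x ∈ Set.Icc a b, |v x| ≤ M) →
            (interp v).natDegree ≤ q) →
        (∀ u v : ℝ → ℝ, IntervalIntegrable u volume a b →
            (∃ M : ℝ, ∀ x ∈ Set.Icc a b, |u x| ≤ M) →
            IntervalIntegrable v volume a b →
            (∃ M : ℝ, ∀ x ∈ Set.Icc a b, |v x| ≤ M) →
            interp (u + v) = interp u + interp v) →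
        (∀ (c : ℝ) (v : ℝ → ℝ), IntervalIntegrable v volume a b →
            (∃ M : ℝ, ∀ x ∈ Set.Icc a b, |v x| ≤ M) →
            interp (fun x => c * v x) = Polynomial.C c * interp v) →
        (∀ v : ℝ → ℝ, IntervalIntegrable v volume a b →
            (∃ M : ℝ, ∀ x ∈ Set.Icc a b, |v x| ≤ M) →
            ∀ M : ℝ, (∀ x ∈ Set.Icc a b, |v x| ≤ M) →
              ∀ x ∈ Set.Icc a b, |(interp v).eval x| ≤ Λ * M) →
        (∀ P : Polynomial ℝ, P.natDegree ≤ q → interp (fun x => P.eval x) = P) →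
        -- v piecewise C^{q+1} with nodes y 1 < ⋯ < y n in (a,b), pieces g 0, …, g n
        ∀ (n : ℕ) (y : ℕ → ℝ) (g : ℕ → ℝ → ℝ) (v : ℝ → ℝ),
          y 0 = a → y (n + 1) = b →
          (∀ j ≤ n, y j < y (j + 1)) →
          (∀ j ≤ n, ContDiff ℝ (q + 1) (g j)) →
          (∀ j ≤ n, ∀ s ∈ Set.Ioo (y j) (y (j + 1)), v s = g j s) →
          v a = g 0 a → v b = g n b →
          (∀ j, 1 ≤ j → j ≤ n → v (y j) = g (j - 1) (y j) ∨ v (y j) = g j (y j)) →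
          ∀ r ≤ q, ∀ p ≤ r + 1, ∀ Mr : ℝ,
            (∀ j ≤ n, ∀ s ∈ Set.Icc (y j) (y (j + 1)), |iteratedDeriv (r + 1) (g j) s| ≤ Mr) →
            ∀ j ≤ n, ∀ s ∈ Set.Icc (y j) (y (j + 1)),
              |((⇑Polynomial.derivative)^[p] (interp v)).eval s - iteratedDeriv p (g j) s| ≤
                C * (b - a) ^ ((r : ℤ) + 1 - (p : ℤ)) * Mr +
                C * ∑ j' ∈ Finset.Icc 1 n, ∑ m ∈ Finset.range (r + 1),
                  (b - a) ^ ((m : ℤ) - (p : ℤ)) *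
                    |iteratedDeriv m (g j') (y j') - iteratedDeriv m (g (j' - 1)) (y j')| := by
  obtain ⟨K, hK, hinv⟩ := pie_inverse q
  refine ⟨K * Λ + 1, by positivity, ?_⟩
  intro a b hab interp hdeg hadd _ hbound hexact n y g v hy0 hyn hy hg hv hva hvb hvn r hr p hp Mr hMr
  have hk : 0 < b - a := by linarith
  set k := b - a with hkdef
  -- Taylor polynomial of the first piece
  obtain ⟨P, hPdeg, hP⟩ := pie_taylor r a (fun m => iteratedDeriv m (g 0) a)
  set J : ℕ → ℝ := fun m => ∑ j' ∈ Finset.Icc 1 n,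
    |iteratedDeriv m (g j') (y j') - iteratedDeriv m (g (j' - 1)) (y j')| with hJ
  have hJ0 : ∀ m, 0 ≤ J m := fun m => Finset.sum_nonneg fun _ _ => abs_nonneg _
  have hMr0 : 0 ≤ Mr := (abs_nonneg _).trans (hMr 0 (Nat.zero_le n) (y 0) ⟨le_rfl, (hy 0 (Nat.zero_le n)).le⟩)
  set T : ℕ → ℝ := fun m => ∑ l ∈ Finset.Ico m (r + 1), k ^ l * J l + k ^ (r + 1) * Mr with hT
  set R : ℕ → ℕ → ℝ → ℝ := fun m j x =>
    iteratedDeriv m (g j) x - ((⇑Polynomial.derivative)^[m] P).eval x with hR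
  have hmono : ∀ i j, i ≤ j → j ≤ n + 1 → y i ≤ y j := by
    intro i j hij
    induction j, hij using Nat.le_induction with
    | base => intro _; exact le_rfl
    | succ j hij ih => intro h; exact (ih (by omega)).trans (hy j (by omega)).le
  have hRd : ∀ m ≤ r, ∀ j ≤ n, ∀ x, HasDerivAt (R m j) (R (m + 1) j x) x := by
    intro m hm j hj x
    simp only [hR]
    rw [Function.iterate_succ_apply', iteratedDeriv_succ]
    have hlt : (m : WithTop ℕ∞) < (q : WithTop ℕ∞) + 1 := by
      have : m < q + 1 := by omega
      exact_mod_cast this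
    exact (((hg j hj).differentiable_iteratedDeriv m hlt) x).hasDerivAt.sub
      (Polynomial.hasDerivAt _ x)
  have main : ∀ d m, m + d = r + 1 → ∀ j ≤ n, ∀ s ∈ Set.Icc (y j) (y (j + 1)),
      k ^ m * |R m j s| ≤ T m := by
    intro d
    induction d with
    | zero =>
      intro m hm j hj s hs
      have hm' : m = r + 1 := by omega
      subst hm'
      have h0 : (⇑Polynomial.derivative)^[r + 1] P = 0 :=
        Polynomial.iterate_derivative_eq_zero (by omega)
      simp only [hR, hT, h0, Polynomial.eval_zero, sub_zero, Finset.Ico_self, Finset.sum_empty, zero_add]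
      exact mul_le_mul_of_nonneg_left (hMr j hj s hs) (by positivity)
    | succ d ih =>
      intro m hm j hj s hs
      have ih' := ih (m + 1) (by omega)
      have hkm : 0 < k ^ (m + 1) := by positivity
      have hstep := pie_step n y (R m) (R (m + 1)) (T (m + 1) / k ^ (m + 1)) hy
        (hRd m (by omega)) (fun j hj s hs => by
          rw [le_div_iff₀ hkm, mul_comm]; exact ih' j hj s hs)
        (by simp only [hR]; rw [hy0, hP m (by omega), sub_self]) j hj s hs
      have hsum : ∑ i ∈ Finset.Icc 1 j, |R m i (y i) - R m (i - 1) (y i)| ≤ J m := by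
        simp only [hR, hJ, sub_sub_sub_cancel_right]
        exact Finset.sum_le_sum_of_subset_of_nonneg
          (Finset.Icc_subset_Icc le_rfl hj) fun _ _ _ => abs_nonneg _
      have hTs : T m = k ^ m * J m + T (m + 1) := by
        simp only [hT]
        rw [Finset.sum_eq_sum_Ico_succ_bot (by omega)]
        ring
      have hTn : 0 ≤ T (m + 1) := by
        simp only [hT]
        have : 0 ≤ ∑ l ∈ Finset.Ico (m + 1) (r + 1), k ^ l * J l :=
          Finset.sum_nonneg fun l _ => mul_nonneg (by positivity) (hJ0 l)
        positivity
      have hsa : s - y 0 ≤ k := by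
        have := hmono (j + 1) (n + 1) (by omega) le_rfl
        rw [hyn] at this
        rw [hy0, hkdef]
        linarith [hs.2]
      have h3 : |R m j s| ≤ J m + T (m + 1) / k ^ (m + 1) * k :=
        hstep.trans (add_le_add hsum (mul_le_mul_of_nonneg_left hsa (by positivity)))
      calc k ^ m * |R m j s| ≤ k ^ m * (J m + T (m + 1) / k ^ (m + 1) * k) :=
            mul_le_mul_of_nonneg_left h3 (by positivity)
        _ = T m := by
            rw [hTs, pow_succ]
            field_simp
  have hR0 : ∀ j ≤ n, ∀ s ∈ Set.Icc (y j) (y (j + 1)), |g j s - P.eval s| ≤ T 0 := by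
    intro j hj s hs
    simpa [hR] using main (r + 1) 0 (by omega) j hj s hs
  have hnode : ∀ i ≤ n + 1, |v (y i) - P.eval (y i)| ≤ T 0 := by
    intro i hi
    rcases Nat.eq_zero_or_pos i with h | h
    · subst h
      have := hR0 0 (Nat.zero_le n) (y 0) ⟨le_rfl, (hy 0 (Nat.zero_le n)).le⟩
      rw [hy0] at this ⊢
      rwa [hva]
    · rcases Nat.lt_or_ge n i with h2 | h2
      · have h3 : i = n + 1 := by omega
        subst h3
        have := hR0 n le_rfl (y (n + 1)) ⟨(hy n le_rfl).le, le_rfl⟩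
        rw [hyn] at this ⊢
        rwa [hvb]
      · rcases hvn i h h2 with h3 | h3
        · rw [h3]
          obtain ⟨i', rfl⟩ : ∃ i', i = i' + 1 := ⟨i - 1, by omega⟩
          exact hR0 i' (by omega) _ ⟨(hy i' (by omega)).le, le_rfl⟩
        · rw [h3]
          exact hR0 i h2 _ ⟨le_rfl, (hy i h2).le⟩
  set w : ℝ → ℝ := fun x => v x - P.eval x with hw
  have hwb : ∀ x ∈ Set.Icc a b, |w x| ≤ T 0 := by
    intro x hx
    obtain ⟨j, hj, hxj⟩ := pie_locate n y x (by rw [hy0]; exact hx.1) (by rw [hyn]; exact hx.2)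
    rcases eq_or_lt_of_le hxj.1 with h | h
    · rw [← h]; exact hnode j (by omega)
    rcases eq_or_lt_of_le hxj.2 with h' | h'
    · rw [h']; exact hnode (j + 1) (by omega)
    simp only [hw]
    rw [hv j hj x ⟨h, h'⟩]
    exact hR0 j hj x hxj
  have hPi : IntervalIntegrable (fun x => P.eval x) volume a b :=
    P.continuous.intervalIntegrable a b
  have hvi : IntervalIntegrable v volume a b := by
    have : IntervalIntegrable v volume (y 0) (y (n + 1)) := by
      refine IntervalIntegrable.trans_iterate fun j hj => ?_
      refine IntervalIntegrable.congr_uIoo ((hg j (by omega)).continuous.intervalIntegrable _ _) ?_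
      rw [Set.uIoo_of_le (hy j (by omega)).le]
      exact fun s hs => (hv j (by omega) s hs).symm
    rwa [hy0, hyn] at this
  have hwi : IntervalIntegrable w volume a b := hvi.sub hPi
  have hPb : ∃ M : ℝ, ∀ x ∈ Set.Icc a b, |P.eval x| ≤ M := by
    obtain ⟨M, hM⟩ := (isCompact_Icc (a := a) (b := b)).exists_bound_of_continuousOn
      P.continuous.continuousOn
    exact ⟨M, fun s hs => by simpa using hM s hs⟩
  have hiv : interp v = interp w + P := by
    have h1 := hadd w (fun x => P.eval x) hwi ⟨_, hwb⟩ hPi hPb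
    rw [hexact P (hPdeg.trans hr)] at h1
    rw [← h1]
    congr 1
    funext x
    simp [hw]
  intro j hj s hs
  have hsab : s ∈ Set.Icc a b := by
    have h1 := hmono 0 j (by omega) (by omega)
    have h2 := hmono (j + 1) (n + 1) (by omega) le_rfl
    rw [hy0] at h1
    rw [hyn] at h2
    exact ⟨h1.trans hs.1, hs.2.trans h2⟩
  have e1 := hinv a b hab (interp w) (hdeg w hwi ⟨_, hwb⟩) (Λ * T 0)
    (hbound w hwi ⟨_, hwb⟩ (T 0) hwb) p (by omega) s hsab
  have e2 := main (r + 1 - p) p (by omega) j hj s hs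
  have hTp : T p ≤ T 0 := by
    simp only [hT]
    refine add_le_add ?_ le_rfl
    exact Finset.sum_le_sum_of_subset_of_nonneg (Finset.Ico_subset_Ico (Nat.zero_le p) le_rfl)
      fun l _ _ => mul_nonneg (by positivity) (hJ0 l)
  have hkp : 0 < k ^ p := by positivity
  have hrhs : (K * Λ + 1) * k ^ ((r : ℤ) + 1 - (p : ℤ)) * Mr +
      (K * Λ + 1) * ∑ j' ∈ Finset.Icc 1 n, ∑ m ∈ Finset.range (r + 1),
        k ^ ((m : ℤ) - (p : ℤ)) *
          |iteratedDeriv m (g j') (y j') - iteratedDeriv m (g (j' - 1)) (y j')|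
      = (K * Λ + 1) * T 0 / k ^ p := by
    have hz : ∀ m : ℕ, k ^ ((m : ℤ) - (p : ℤ)) = k ^ m / k ^ p := by
      intro m
      rw [zpow_sub₀ hk.ne', zpow_natCast, zpow_natCast]
    have hz1 := hz (r + 1)
    push_cast at hz1
    rw [hz1, Finset.sum_comm]
    simp only [hz, hT, hJ, ← Finset.mul_sum, Finset.range_eq_Ico]
    rw [mul_add, add_div, add_comm]
    congr 1
    · rw [mul_div_assoc, Finset.sum_div]
      congr 1
      refine Finset.sum_congr rfl fun m _ => ?_
      ring
    · ring
  rw [hrhs, le_div_iff₀ hkp, hiv, iterate_map_add, Polynomial.eval_add]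
  have e3 : ((⇑Polynomial.derivative)^[p] (interp w)).eval s +
      ((⇑Polynomial.derivative)^[p] P).eval s - iteratedDeriv p (g j) s =
      ((⇑Polynomial.derivative)^[p] (interp w)).eval s - R p j s := by
    simp only [hR]; ring
  rw [e3]
  rw [← hkdef] at e1
  have e4 := norm_sub_le (((⇑Polynomial.derivative)^[p] (interp w)).eval s) (R p j s)
  simp only [Real.norm_eq_abs] at e4
  have e5 := mul_le_mul_of_nonneg_right e4 hkp.le
  nlinarith
end

section
/- Let q ≥ 0 be an integer, Λ > 0, and let π be a linear operator mapping bounded integrable functions on [a,b] into polynomials of degree at most q with ‖πv‖_{L∞([a,b])} ≤ Λ·‖v‖_{L∞([a,b])} for all bounded integrable v and πv = v for every polynomial v of degree at most q. Then there is a constant C = C(q,Λ) > 0 such that for every v : [a,b] → ℝ that is piecewise C^{q+1} with discontinuities at a < x_1 < ⋯ < x_n < b, one has ‖(πv)^{(p)}‖ ≤ C·‖v^{(p)}‖ + C·Σ_{j=1}^{n} Σ_{m=0}^{p−1} k^{m−p}·|[v^{(m)}]_{x_j}| for all p = 0,…,q. -/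
open MeasureTheory

lemma aux_iter_comp (Q : Polynomial ℝ) (k a : ℝ) (p : ℕ) :
    (⇑Polynomial.derivative)^[p] (Q.comp (Polynomial.C k * Polynomial.X + Polynomial.C a)) =
      Polynomial.C (k ^ p) * ((⇑Polynomial.derivative)^[p] Q).comp
        (Polynomial.C k * Polynomial.X + Polynomial.C a) := by
  induction p with
  | zero => simp
  | succ p ih =>
    rw [Function.iterate_succ_apply', ih, Function.iterate_succ_apply']
    simp only [Polynomial.derivative_mul, Polynomial.derivative_comp, Polynomial.derivative_C,
      Polynomial.derivative_add, Polynomial.derivative_X, pow_succ, Polynomial.C_mul]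
    ring

/-- Markov-type inequality on the unit interval. -/
lemma aux_markov_unit (q p : ℕ) : ∃ K : ℝ, 0 < K ∧ ∀ Q : Polynomial ℝ, Q.natDegree ≤ q →
    ∀ M : ℝ, (∀ x ∈ Set.Icc (0 : ℝ) 1, |Q.eval x| ≤ M) →
      ∀ x ∈ Set.Icc (0 : ℝ) 1, |((⇑Polynomial.derivative)^[p] Q).eval x| ≤ K * M := by
  classical
  let s : Finset ℕ := Finset.range (q + 1)
  let w : ℕ → ℝ := fun i => (i : ℝ) / (q + 1)
  have hq : (0 : ℝ) < q + 1 := by positivity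
  have hinj : Set.InjOn w s := by
    intro i _ j _ h
    have h' : (i : ℝ) / (q + 1) = j / (q + 1) := h
    rw [div_left_inj' hq.ne'] at h'
    exact_mod_cast h'
  have hw : ∀ i ∈ s, w i ∈ Set.Icc (0 : ℝ) 1 := by
    intro i hi
    have : i < q + 1 := Finset.mem_range.1 hi
    have : (i : ℝ) < q + 1 := by exact_mod_cast this
    exact ⟨by positivity, (div_le_one hq).2 this.le⟩
  have hb : ∀ i, ∃ B : ℝ, ∀ x ∈ Set.Icc (0 : ℝ) 1,
      |((⇑Polynomial.derivative)^[p] (Lagrange.basis s w i)).eval x| ≤ B := by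
    intro i
    obtain ⟨B, hB⟩ := isCompact_Icc.exists_bound_of_continuousOn
      (s := Set.Icc (0 : ℝ) 1)
      (f := fun x => ((⇑Polynomial.derivative)^[p] (Lagrange.basis s w i)).eval x)
      (Polynomial.continuous _).continuousOn
    exact ⟨B, fun x hx => hB x hx⟩
  choose B hB using hb
  have hB0 : ∀ i, 0 ≤ B i := fun i => (abs_nonneg _).trans (hB i 0 (by simp))
  refine ⟨∑ i ∈ s, B i + 1, add_pos_of_nonneg_of_pos (Finset.sum_nonneg fun i _ => hB0 i) one_pos,
    fun Q hQ M hM x hx => ?_⟩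
  have hM0 : 0 ≤ M := (abs_nonneg _).trans (hM x hx)
  have hdeg : Q.degree < s.card := by
    rw [Finset.card_range]
    exact lt_of_le_of_lt Polynomial.degree_le_natDegree (by exact_mod_cast Nat.lt_succ_of_le hQ)
  have hQe := Lagrange.eq_interpolate hinj hdeg
  rw [Lagrange.interpolate_apply] at hQe
  rw [hQe, Polynomial.iterate_derivative_sum, Polynomial.eval_finsetSum]
  calc |∑ i ∈ s, _| ≤ ∑ i ∈ s, |_| := Finset.abs_sum_le_sum_abs _ _
    _ ≤ ∑ i ∈ s, M * B i := by
      refine Finset.sum_le_sum fun i hi => ?_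
      rw [Polynomial.iterate_derivative_C_mul, Polynomial.eval_mul, Polynomial.eval_C, abs_mul]
      exact mul_le_mul (hM _ (hw i hi)) (hB i x hx) (abs_nonneg _) hM0
    _ = (∑ i ∈ s, B i) * M := by rw [← Finset.mul_sum, mul_comm]
    _ ≤ _ := by nlinarith

lemma aux_markov (q : ℕ) : ∃ K : ℝ, 0 < K ∧ ∀ p ≤ q, ∀ a b : ℝ, a < b →
    ∀ Q : Polynomial ℝ, Q.natDegree ≤ q →
    ∀ M : ℝ, (∀ x ∈ Set.Icc a b, |Q.eval x| ≤ M) →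
      ∀ x ∈ Set.Icc a b,
        (b - a) ^ p * |((⇑Polynomial.derivative)^[p] Q).eval x| ≤ K * M := by
  choose K hK hKm using aux_markov_unit q
  refine ⟨∑ p ∈ Finset.range (q + 1), K p, Finset.sum_pos (fun i _ => hK i) (by simp), ?_⟩
  intro p hp a b hab Q hQ M hM x hx
  have hk : 0 < b - a := sub_pos.2 hab
  have hM0 : 0 ≤ M := (abs_nonneg _).trans (hM x hx)
  let R := Q.comp (Polynomial.C (b - a) * Polynomial.X + Polynomial.C a)
  have hR : R.natDegree ≤ q := by
    refine (Polynomial.natDegree_comp_le).trans ?_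
    calc _ ≤ Q.natDegree * 1 := Nat.mul_le_mul_left _ Polynomial.natDegree_linear_le
      _ ≤ q := by omega
  have h1 : ∀ t ∈ Set.Icc (0 : ℝ) 1, |R.eval t| ≤ M := by
    intro t ht
    simp only [R, Polynomial.eval_comp, Polynomial.eval_add, Polynomial.eval_mul,
      Polynomial.eval_C, Polynomial.eval_X]
    exact hM _ ⟨by nlinarith [ht.1], by nlinarith [ht.2]⟩
  have h2 := hKm p R hR M h1 ((x - a) / (b - a))
    ⟨div_nonneg (by linarith [hx.1]) hk.le, (div_le_one hk).2 (by linarith [hx.2])⟩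
  have hx' : (b - a) * ((x - a) / (b - a)) + a = x := by field_simp; ring
  simp only [R, aux_iter_comp, Polynomial.eval_comp, Polynomial.eval_add, Polynomial.eval_mul,
      Polynomial.eval_C, Polynomial.eval_X, hx', abs_mul, abs_of_pos (pow_pos hk p)] at h2
  refine h2.trans (mul_le_mul_of_nonneg_right ?_ hM0)
  exact Finset.single_le_sum (fun i _ => (hK i).le) (Finset.mem_range.2 (by omega))

lemma aux_taylor (c : ℕ → ℝ) (a : ℝ) (p : ℕ) : ∃ P : Polynomial ℝ, P.degree < p ∧
    ∀ i < p, ((⇑Polynomial.derivative)^[i] P).eval a = c i := by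
  induction p with
  | zero => exact ⟨0, by simp, by simp⟩
  | succ p ih =>
    obtain ⟨P, hP, hc⟩ := ih
    refine ⟨P + Polynomial.C (c p / p.factorial) * (Polynomial.X - Polynomial.C a) ^ p, ?_, ?_⟩
    · refine lt_of_le_of_lt (Polynomial.degree_add_le _ _) (max_lt ?_ ?_)
      · exact hP.trans (by exact_mod_cast Nat.lt_succ_self p)
      · refine lt_of_le_of_lt ((Polynomial.degree_mul_le _ _).trans
          (add_le_add Polynomial.degree_C_le le_rfl)) ?_
        rw [Polynomial.degree_pow, Polynomial.degree_X_sub_C]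
        simp only [nsmul_eq_mul, mul_one, zero_add]
        exact_mod_cast Nat.lt_succ_self p
    · intro i hi
      rw [iterate_map_add, Polynomial.iterate_derivative_C_mul,
        Polynomial.iterate_derivative_X_sub_pow]
      rcases Nat.lt_succ_iff_lt_or_eq.1 hi with h | h
      · have : p - i ≠ 0 := by omega
        simp [hc i h, this]
      · subst h
        have : (i.factorial : ℝ) ≠ 0 := by positivity
        rw [Polynomial.iterate_derivative_eq_zero_of_degree_lt hP]
        simp [Nat.descFactorial_self]
        field_simp

/-- One integration step for piecewise functions. -/
lemma aux_step (n : ℕ) (y : ℕ → ℝ) (hy : ∀ j ≤ n, y j < y (j + 1)) (F F' : ℕ → ℝ → ℝ)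
    (hF : ∀ j ≤ n, ∀ s, HasDerivAt (F j) (F' j s) s) (D : ℝ)
    (hD : ∀ j ≤ n, ∀ s ∈ Set.Icc (y j) (y (j + 1)), |F' j s| ≤ D) (h0 : F 0 (y 0) = 0) :
    ∀ j ≤ n, ∀ s ∈ Set.Icc (y j) (y (j + 1)),
      |F j s| ≤ D * (s - y 0) + ∑ j' ∈ Finset.Icc 1 j, |F j' (y j') - F (j' - 1) (y j')| := by
  have key : ∀ j ≤ n, ∀ s ∈ Set.Icc (y j) (y (j + 1)), |F j s - F j (y j)| ≤ D * (s - y j) := by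
    intro j hj s hs
    have := norm_image_sub_le_of_norm_deriv_le_segment' (f := F j) (f' := F' j) (C := D)
      (a := y j) (b := y (j + 1)) (fun x _ => (hF j hj x).hasDerivWithinAt)
      (fun x hx => hD j hj x ⟨hx.1, hx.2.le⟩) s hs
    exact this
  intro j
  induction j with
  | zero =>
    intro hj s hs
    have := key 0 hj s hs
    simpa [h0] using this
  | succ j ih =>
    intro hj s hs
    have h1 := key (j + 1) hj s hs
    have h2 := ih (by omega) (y (j + 1)) ⟨(hy j (by omega)).le, le_rfl⟩
    rw [Finset.sum_Icc_succ_top (by omega)]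
    have e : F (j + 1) s = (F (j + 1) s - F (j + 1) (y (j + 1))) + (F j (y (j + 1))
        + (F (j + 1) (y (j + 1)) - F j (y (j + 1)))) := by ring
    have h3 := abs_add_le (F (j + 1) s - F (j + 1) (y (j + 1))) (F j (y (j + 1))
        + (F (j + 1) (y (j + 1)) - F j (y (j + 1))))
    have h4 := abs_add_le (F j (y (j + 1))) (F (j + 1) (y (j + 1)) - F j (y (j + 1)))
    rw [← e] at h3
    simp only [Nat.add_sub_cancel]
    linarith

lemma aux_locate (n : ℕ) (y : ℕ → ℝ) (g : ℕ → ℝ → ℝ) (v : ℝ → ℝ)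
    (hy : ∀ j ≤ n, y j < y (j + 1))
    (hv : ∀ j ≤ n, ∀ s ∈ Set.Ioo (y j) (y (j + 1)), v s = g j s)
    (h0 : v (y 0) = g 0 (y 0)) (h1 : v (y (n + 1)) = g n (y (n + 1)))
    (hj : ∀ j, 1 ≤ j → j ≤ n → v (y j) = g (j - 1) (y j) ∨ v (y j) = g j (y j)) :
    ∀ s ∈ Set.Icc (y 0) (y (n + 1)), ∃ j ≤ n, s ∈ Set.Icc (y j) (y (j + 1)) ∧ v s = g j s := by
  have key : ∀ m ≤ n, ∀ s, y 0 ≤ s → s < y (m + 1) →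
      ∃ j ≤ n, s ∈ Set.Icc (y j) (y (j + 1)) ∧ v s = g j s := by
    intro m
    induction m with
    | zero =>
      intro hm s h h'
      rcases h.eq_or_lt with e | h
      · subst e; exact ⟨0, hm, ⟨le_rfl, h'.le⟩, h0⟩
      · exact ⟨0, hm, ⟨h.le, h'.le⟩, hv 0 hm s ⟨h, h'⟩⟩
    | succ m ih =>
      intro hm s h h'
      rcases lt_trichotomy s (y (m + 1)) with e | e | e
      · exact ih (by omega) s h e
      · subst e
        rcases hj (m + 1) (by omega) hm with e | e
        · exact ⟨m, by omega, ⟨(hy m (by omega)).le, le_rfl⟩, e⟩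
        · exact ⟨m + 1, hm, ⟨le_rfl, h'.le⟩, e⟩
      · exact ⟨m + 1, hm, ⟨e.le, h'.le⟩, hv _ hm s ⟨e, h'⟩⟩
  intro s hs
  rcases hs.2.eq_or_lt with e | h
  · subst e; exact ⟨n, le_rfl, ⟨(hy n le_rfl).le, le_rfl⟩, h1⟩
  · exact key n le_rfl s hs.1 h

/-- Approximation of the piecewise function by a Taylor polynomial. -/
lemma aux_approx (q n : ℕ) (y : ℕ → ℝ) (g : ℕ → ℝ → ℝ)
    (hy : ∀ j ≤ n, y j < y (j + 1)) (hg : ∀ j ≤ n, ContDiff ℝ (q + 1) (g j))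
    (hab : y 0 < y (n + 1)) (hsub : ∀ j ≤ n, y (j + 1) ≤ y (n + 1))
    (p : ℕ) (hp : p ≤ q) (Mp : ℝ) (P : Polynomial ℝ) (hP : P.degree < p)
    (hPa : ∀ i < p, ((⇑Polynomial.derivative)^[i] P).eval (y 0) = iteratedDeriv i (g 0) (y 0))
    (hMp : ∀ j ≤ n, ∀ s ∈ Set.Icc (y j) (y (j + 1)), |iteratedDeriv p (g j) s| ≤ Mp) :
    ∀ d ≤ p, ∀ j ≤ n, ∀ s ∈ Set.Icc (y j) (y (j + 1)),
      |iteratedDeriv (p - d) (g j) s - ((⇑Polynomial.derivative)^[p - d] P).eval s| ≤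
        (y (n + 1) - y 0) ^ d * (Mp + ∑ m ∈ Finset.Ico (p - d) p, ∑ j' ∈ Finset.Icc 1 n,
          (y (n + 1) - y 0) ^ ((m : ℤ) - (p : ℤ)) *
          |iteratedDeriv m (g j') (y j') - iteratedDeriv m (g (j' - 1)) (y j')|) := by
  set k := y (n + 1) - y 0 with hk
  have hk0 : 0 < k := sub_pos.2 hab
  have hMp0 : 0 ≤ Mp := (abs_nonneg _).trans (hMp 0 (Nat.zero_le _) (y 0)
    ⟨le_rfl, (hy 0 (Nat.zero_le _)).le⟩)
  intro d
  induction d with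
  | zero =>
    intro _ j hj s hs
    have := hMp j hj s hs
    simpa [Polynomial.iterate_derivative_eq_zero_of_degree_lt hP] using this
  | succ d ih =>
    intro hd j hj s hs
    obtain ⟨i, hi⟩ : ∃ i, p = i + (d + 1) := ⟨p - (d + 1), by omega⟩
    have e1 : p - d = i + 1 := by omega
    have e2 : p - (d + 1) = i := by omega
    have ih := ih (by omega)
    rw [e1] at ih
    rw [e2]
    have hstep := aux_step n y hy
      (fun j s => iteratedDeriv i (g j) s - ((⇑Polynomial.derivative)^[i] P).eval s)
      (fun j s => iteratedDeriv (i + 1) (g j) s - ((⇑Polynomial.derivative)^[i + 1] P).eval s)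
      (by
        intro j hj s
        rw [iteratedDeriv_succ, Function.iterate_succ_apply']
        refine HasDerivAt.sub ?_ (Polynomial.hasDerivAt _ _)
        refine ((hg j hj).differentiable_iteratedDeriv i ?_ s).hasDerivAt
        have : i < q + 1 := by omega
        exact_mod_cast this)
      _ ih (by simp [hPa i (by omega)]) j hj s hs
    refine hstep.trans ?_
    rw [Finset.sum_eq_sum_Ico_succ_bot (show i < p by omega)]
    set S := ∑ m ∈ Finset.Ico (i + 1) p, ∑ j' ∈ Finset.Icc 1 n, k ^ ((m : ℤ) - (p : ℤ)) *
          |iteratedDeriv m (g j') (y j') - iteratedDeriv m (g (j' - 1)) (y j')| with hS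
    have hS0 : 0 ≤ S := Finset.sum_nonneg fun _ _ => Finset.sum_nonneg fun _ _ => by positivity
    have hA : k ^ d * (Mp + S) * (s - y 0) ≤ k ^ (d + 1) * (Mp + S) := by
      have : s - y 0 ≤ k := by
        have := hs.2.trans (hsub j hj); rw [hk]; linarith
      calc _ ≤ k ^ d * (Mp + S) * k := mul_le_mul_of_nonneg_left this (by positivity)
        _ = _ := by ring
    have hB : ∑ j' ∈ Finset.Icc 1 j,
        |iteratedDeriv i (g j') (y j') - ((⇑Polynomial.derivative)^[i] P).eval (y j') -
          (iteratedDeriv i (g (j' - 1)) (y j') - ((⇑Polynomial.derivative)^[i] P).eval (y j'))|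
        ≤ k ^ (d + 1) * ∑ j' ∈ Finset.Icc 1 n, k ^ ((i : ℤ) - (p : ℤ)) *
          |iteratedDeriv i (g j') (y j') - iteratedDeriv i (g (j' - 1)) (y j')| := by
      rw [← Finset.mul_sum, ← mul_assoc]
      have : k ^ (d + 1) * k ^ ((i : ℤ) - (p : ℤ)) = 1 := by
        rw [← zpow_natCast, ← zpow_add₀ hk0.ne']
        have : ((d + 1 : ℕ) : ℤ) + ((i : ℤ) - (p : ℤ)) = 0 := by rw [hi]; push_cast; ring
        rw [this, zpow_zero]
      rw [this, one_mul]
      simp only [sub_sub_sub_cancel_right]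
      exact Finset.sum_le_sum_of_subset_of_nonneg (Finset.Icc_subset_Icc_right hj)
        (fun _ _ _ => abs_nonneg _)
    calc _ ≤ _ := add_le_add hA hB
      _ = _ := by ring

/-- Derivative estimate for the interpolant of a piecewise smooth function (Lemma 5.3):
if `interp` is a linear interpolation operator into polynomials of degree at most `q`,
bounded by `Λ` and exact on polynomials of degree at most `q`, then there is
`C = C(q,Λ) > 0` such that for every `v : [a,b] → ℝ` which is piecewise `C^{q+1}`
with discontinuities at `a < x₁ < ⋯ < xₙ < b` (pieces given by globally `C^{q+1}`
functions `g 0, …, g n`, the value of `v` at an interior node being one of its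
one-sided limits), one has, for `p = 0, …, q`,
`‖(interp v)^{(p)}‖ ≤ C ‖v^{(p)}‖ + C ∑_{j=1}^{n} ∑_{m=0}^{p-1} k^{m-p} |[v^{(m)}]_{x_j}|`,
where `k = b - a` and `[v^{(m)}]_{x_j} = g_j^{(m)}(x_j) - g_{j-1}^{(m)}(x_j)`. -/
theorem piecewise_interpolant_derivative_estimate (q : ℕ) (Λ : ℝ) (hΛ : 0 < Λ) :
    ∃ C : ℝ, 0 < C ∧ ∀ (a b : ℝ), a < b →
      ∀ interp : (ℝ → ℝ) → Polynomial ℝ,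
        (∀ v : ℝ → ℝ, IntervalIntegrable v volume a b →
            (∃ M : ℝ, ∀ x ∈ Set.Icc a b, |v x| ≤ M) →
            (interp v).natDegree ≤ q) →
        (∀ u v : ℝ → ℝ, IntervalIntegrable u volume a b →
            (∃ M : ℝ, ∀ x ∈ Set.Icc a b, |u x| ≤ M) →
            IntervalIntegrable v volume a b →
            (∃ M : ℝ, ∀ x ∈ Set.Icc a b, |v x| ≤ M) →
            interp (u + v) = interp u + interp v) →
        (∀ (c : ℝ) (v : ℝ → ℝ), IntervalIntegrable v volume a b →
            (∃ M : ℝ, ∀ x ∈ Set.Icc a b, |v x| ≤ M) →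
            interp (fun x => c * v x) = Polynomial.C c * interp v) →
        (∀ v : ℝ → ℝ, IntervalIntegrable v volume a b →
            (∃ M : ℝ, ∀ x ∈ Set.Icc a b, |v x| ≤ M) →
            ∀ M : ℝ, (∀ x ∈ Set.Icc a b, |v x| ≤ M) →
              ∀ x ∈ Set.Icc a b, |(interp v).eval x| ≤ Λ * M) →
        (∀ P : Polynomial ℝ, P.natDegree ≤ q → interp (fun x => P.eval x) = P) →
        ∀ (n : ℕ) (y : ℕ → ℝ) (g : ℕ → ℝ → ℝ) (v : ℝ → ℝ),
          y 0 = a → y (n + 1) = b →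
          (∀ j ≤ n, y j < y (j + 1)) →
          (∀ j ≤ n, ContDiff ℝ (q + 1) (g j)) →
          (∀ j ≤ n, ∀ s ∈ Set.Ioo (y j) (y (j + 1)), v s = g j s) →
          v a = g 0 a → v b = g n b →
          (∀ j, 1 ≤ j → j ≤ n → v (y j) = g (j - 1) (y j) ∨ v (y j) = g j (y j)) →
          ∀ p ≤ q, ∀ Mp : ℝ,
            (∀ j ≤ n, ∀ s ∈ Set.Icc (y j) (y (j + 1)), |iteratedDeriv p (g j) s| ≤ Mp) →
            ∀ s ∈ Set.Icc a b,
              |((⇑Polynomial.derivative)^[p] (interp v)).eval s| ≤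
                C * Mp +
                C * ∑ j' ∈ Finset.Icc 1 n, ∑ m ∈ Finset.range p,
                  (b - a) ^ ((m : ℤ) - (p : ℤ)) *
                    |iteratedDeriv m (g j') (y j') - iteratedDeriv m (g (j' - 1)) (y j')| := by
  obtain ⟨K, hK, hKm⟩ := aux_markov q
  refine ⟨K * Λ, mul_pos hK hΛ, ?_⟩
  intro a b hab interp hdeg hadd _ hbd hpoly n y g v hya hyb hy hg hv hva hvb hvj p hp Mp hMp s hs
  subst hya hyb
  have hmono : ∀ d j, j + d ≤ n + 1 → y j ≤ y (j + d) := by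
    intro d
    induction d with
    | zero => intro j _; exact le_rfl
    | succ d ih => intro j h; exact (ih j (by omega)).trans (hy (j + d) (by omega)).le
  have hsub : ∀ j ≤ n, y (j + 1) ≤ y (n + 1) := by
    intro j hj
    have := hmono (n - j) (j + 1) (by omega)
    rwa [show j + 1 + (n - j) = n + 1 by omega] at this
  obtain ⟨P, hP, hPa⟩ := aux_taylor (fun i => iteratedDeriv i (g 0) (y 0)) (y 0) p
  have happ := aux_approx q n y g hy hg hab hsub p hp Mp P hP hPa hMp p le_rfl
  simp only [Nat.sub_self, iteratedDeriv_zero, Function.iterate_zero, id_eq, 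
    Nat.Ico_zero_eq_range] at happ
  rw [Finset.sum_comm] at happ
  set k := y (n + 1) - y 0 with hk
  have hk0 : 0 < k := sub_pos.2 hab
  set S := ∑ j' ∈ Finset.Icc 1 n, ∑ m ∈ Finset.range p, k ^ ((m : ℤ) - (p : ℤ)) *
    |iteratedDeriv m (g j') (y j') - iteratedDeriv m (g (j' - 1)) (y j')| with hS
  have hvP : ∀ x ∈ Set.Icc (y 0) (y (n + 1)), |v x - P.eval x| ≤ k ^ p * (Mp + S) := by
    intro x hx
    obtain ⟨j, hj, hxj, e⟩ := aux_locate n y g v hy hv hva hvb hvj x hx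
    rw [e]
    exact happ j hj x hxj
  have hPdeg : P.natDegree ≤ q :=
    Polynomial.natDegree_le_of_degree_le (hP.le.trans (by exact_mod_cast hp))
  have hvint : IntervalIntegrable v volume (y 0) (y (n + 1)) := by
    refine IntervalIntegrable.trans_iterate fun j hj => ?_
    refine (((hg j (by omega)).continuous).intervalIntegrable _ _).congr_uIoo ?_
    intro x hx
    rw [Set.uIoo_of_le (hy j (by omega)).le] at hx
    exact (hv j (by omega) x hx).symm
  have hPint : IntervalIntegrable (fun x => P.eval x) volume (y 0) (y (n + 1)) :=
    P.continuous.intervalIntegrable _ _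
  have hPbd : ∃ M : ℝ, ∀ x ∈ Set.Icc (y 0) (y (n + 1)), |P.eval x| ≤ M := by
    obtain ⟨B, hB⟩ := isCompact_Icc.exists_bound_of_continuousOn
      (s := Set.Icc (y 0) (y (n + 1))) (f := fun x => P.eval x) P.continuous.continuousOn
    exact ⟨B, fun x hx => hB x hx⟩
  have huint : IntervalIntegrable (fun x => v x - P.eval x) volume (y 0) (y (n + 1)) :=
    hvint.sub hPint
  have hsum := hadd (fun x => v x - P.eval x) (fun x => P.eval x) huint ⟨_, hvP⟩ hPint hPbd
  rw [hpoly P hPdeg] at hsum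
  have hveq : (fun x => v x - P.eval x) + (fun x => P.eval x) = v := by
    funext x; simp
  rw [hveq] at hsum
  rw [hsum, iterate_map_add,
    Polynomial.iterate_derivative_eq_zero_of_degree_lt hP, add_zero]
  have hfin := hKm p hp (y 0) (y (n + 1)) hab _ (hdeg _ huint ⟨_, hvP⟩) _
    (hbd _ huint ⟨_, hvP⟩ _ hvP) s hs
  rw [← hk] at hfin
  have hkp : 0 < k ^ p := pow_pos hk0 p
  refine le_of_mul_le_mul_left (hfin.trans (le_of_eq ?_)) hkp
  ring
end

section
/- Let p ≥ 0 be an integer, let v : ℝ^N → ℝ be p times continuously differentiable, let x : ℝ → ℝ^N be p times differentiable, and let C_x > 0 be a constant such that ‖x^{(n)}‖_{L∞(ℝ, l∞)} ≤ C_x^n for n = 1,…,p. Then there is a constant C = C(p) > 0, independent of N, v, x, and C_x, such that ‖d^p(v∘x)/dt^p‖_{L∞(ℝ)} ≤ C·‖v‖_{D^p(ℝ^N)}·C_x^p. -/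
/-- `F` is `n` times differentiable with `k`-th derivative bounded by `A * c ^ k`. -/
def GoodB {E : Type} [NormedAddCommGroup E] [NormedSpace ℝ E] (c : ℝ) :
    ℕ → ℝ → (ℝ → E) → Prop
  | 0, A, F => ∀ s, ‖F s‖ ≤ A
  | n + 1, A, F => (∀ s, ‖F s‖ ≤ A) ∧
      ∃ F' : ℝ → E, (∀ s, HasDerivAt F (F' s) s) ∧ GoodB c n (A * c) F'

section
variable {E G : Type} [NormedAddCommGroup E] [NormedSpace ℝ E]
  [NormedAddCommGroup G] [NormedSpace ℝ G] {c : ℝ}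

theorem GoodB.bound {n : ℕ} {A : ℝ} {F : ℝ → E} (h : GoodB c n A F) : ∀ s, ‖F s‖ ≤ A := by
  cases n with
  | zero => exact h
  | succ n => exact h.1

theorem GoodB.mono (hc : 0 < c) {n : ℕ} : ∀ {A B : ℝ} {F : ℝ → E}, GoodB c n A F → A ≤ B →
    GoodB c n B F := by
  induction n with
  | zero => exact fun h hAB s => (h s).trans hAB
  | succ n ih =>
    rintro A B F ⟨h, F', h1, h2⟩ hAB
    exact ⟨fun s => (h s).trans hAB, F', h1, ih h2 (by gcongr)⟩

theorem GoodB.pred {n : ℕ} : ∀ {A : ℝ} {F : ℝ → E}, GoodB c (n + 1) A F → GoodB c n A F := by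
  induction n with
  | zero => exact fun h => h.1
  | succ n ih =>
    rintro A F ⟨h, F', h1, h2⟩
    exact ⟨h, F', h1, ih h2⟩

theorem GoodB.add {n : ℕ} : ∀ {A B : ℝ} {F H : ℝ → E}, GoodB c n A F → GoodB c n B H →
    GoodB c n (A + B) (fun s => F s + H s) := by
  induction n with
  | zero => exact fun h k s => (norm_add_le _ _).trans (add_le_add (h s) (k s))
  | succ n ih =>
    rintro A B F H ⟨h, F', h1, h2⟩ ⟨k, H', k1, k2⟩
    refine ⟨fun s => (norm_add_le _ _).trans (add_le_add (h s) (k s)), _,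
      fun s => (h1 s).add (k1 s), ?_⟩
    rw [add_mul]
    exact ih h2 k2

theorem GoodB.apply (hc : 0 < c) {n : ℕ} : ∀ {A B : ℝ} {F : ℝ → E →L[ℝ] G} {H : ℝ → E},
    GoodB c n A F → GoodB c n B H → GoodB c n (2 ^ n * (A * B)) (fun s => F s (H s)) := by
  have key : ∀ {A B : ℝ} {F : ℝ → E →L[ℝ] G} {H : ℝ → E}, (∀ s, ‖F s‖ ≤ A) →
      (∀ s, ‖H s‖ ≤ B) → ∀ s, ‖F s (H s)‖ ≤ A * B := by
    intro A B F H h k s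
    refine ((F s).le_opNorm _).trans ?_
    exact mul_le_mul (h s) (k s) (norm_nonneg _) ((norm_nonneg _).trans (h s))
  induction n with
  | zero => exact fun h k s => by simpa using key h k s
  | succ n ih =>
    intro A B F H hF hH
    have hF0 := hF.pred
    have hH0 := hH.pred
    obtain ⟨h, F', h1, h2⟩ := hF
    obtain ⟨k, H', k1, k2⟩ := hH
    have hAB : 0 ≤ A * B :=
      mul_nonneg ((norm_nonneg _).trans (h 0)) ((norm_nonneg _).trans (k 0))
    refine ⟨fun s => (key h k s).trans ?_, _, fun s => (h1 s).clm_apply (k1 s), ?_⟩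
    · exact le_mul_of_one_le_left hAB (one_le_pow₀ (by norm_num))
    · have := (ih h2 hH0).add (ih hF0 k2)
      convert this using 1
      ring

theorem GoodB.iter {n : ℕ} : ∀ {A : ℝ} {F : ℝ → E}, GoodB c n A F →
    ∀ s, ‖iteratedDeriv n F s‖ ≤ A * c ^ n := by
  induction n with
  | zero => exact fun h s => by simpa using h s
  | succ n ih =>
    rintro A F ⟨h, F', h1, h2⟩ s
    have : deriv F = F' := funext fun s => (h1 s).deriv
    rw [iteratedDeriv_succ', this, pow_succ', ← mul_assoc]
    exact ih h2 s

theorem GoodB.of_iter {n : ℕ} : ∀ {A : ℝ} {F : ℝ → E},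
    (∀ k < n, Differentiable ℝ (iteratedDeriv k F)) →
    (∀ k ≤ n, ∀ s, ‖iteratedDeriv k F s‖ ≤ A * c ^ k) → GoodB c n A F := by
  induction n with
  | zero => exact fun _ h s => by simpa using h 0 le_rfl s
  | succ n ih =>
    intro A F hd hb
    refine ⟨fun s => by simpa using hb 0 (by omega) s, deriv F, fun s => ?_, ih ?_ ?_⟩
    · have := hd 0 (by omega)
      rw [iteratedDeriv_zero] at this
      exact (this s).hasDerivAt
    · intro k hk
      rw [← iteratedDeriv_succ']
      exact hd _ (by omega)
    · intro k hk s
      have := hb (k + 1) (by omega) s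
      rwa [iteratedDeriv_succ', pow_succ', ← mul_assoc] at this

theorem GoodB.comp (hc : 0 < c) {x : ℝ → E} (n : ℕ) : ∀ {G : Type} [NormedAddCommGroup G]
    [NormedSpace ℝ G] {v : E → G} {D : ℝ}, 0 ≤ D → ContDiff ℝ n v →
    (∀ k ≤ n, ∀ y, ‖iteratedFDeriv ℝ k v y‖ ≤ D) →
    (∀ k < n, Differentiable ℝ (iteratedDeriv k x)) →
    (∀ k, 1 ≤ k → k ≤ n → ∀ s, ‖iteratedDeriv k x s‖ ≤ c ^ k) →
    GoodB c n (2 ^ (n * n) * D) (fun s => v (x s)) := by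
  induction n with
  | zero =>
    intro G _ _ v D hD hv hb _ _ s
    simpa using hb 0 le_rfl (x s)
  | succ n ih =>
    intro G _ _ v D hD hv hb hd hx
    have hx0 : Differentiable ℝ x := by simpa using hd 0 (by omega)
    have hvd : Differentiable ℝ v := hv.differentiable (by simp)
    refine ⟨fun s => ?_, fun s => fderiv ℝ v (x s) (deriv x s), fun s => ?_, ?_⟩
    · have : ‖v (x s)‖ ≤ D := by simpa using hb 0 (by omega) (x s)
      exact this.trans (le_mul_of_one_le_left hD (one_le_pow₀ (by norm_num)))
    · exact (hvd (x s)).hasFDerivAt.comp_hasDerivAt s (hx0 s).hasDerivAt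
    · have h1 := ih (v := fderiv ℝ v) hD (hv.fderiv_right (by simp))
        (fun k hk y => by
          rw [norm_iteratedFDeriv_fderiv]; exact hb (k + 1) (by omega) y)
        (fun k hk => hd k (by omega)) (fun k h1 h2 => hx k h1 (by omega))
      have h2 : GoodB c n c (deriv x) := by
        apply GoodB.of_iter
        · intro k hk
          rw [← iteratedDeriv_succ']
          exact hd _ (by omega)
        · intro k hk s
          rw [← iteratedDeriv_succ', ← pow_succ']
          exact hx _ (by omega) (by omega) s
      refine (h1.apply hc h2).mono hc ?_
      have : (2 : ℝ) ^ n * (2 ^ (n * n) * D * c) = 2 ^ (n + n * n) * (D * c) := by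
        rw [pow_add]; ring
      rw [this, mul_assoc]
      have h3 : 0 ≤ D * c := by positivity
      have h4 : n + n * n ≤ (n + 1) * (n + 1) := by nlinarith
      gcongr
      norm_num
end


/-- Derivative estimate for composite functions (Lemma 5.4): for every `p ≥ 0` there is a
constant `C = C(p) > 0`, independent of `N`, `v`, `x` and `C_x`, such that if
`v : ℝ^N → ℝ` is `p` times continuously differentiable, `x : ℝ → ℝ^N` is `p` times
differentiable with `‖x^{(n)}‖_{L∞(ℝ,l∞)} ≤ C_x^n` for `n = 1,…,p`, and
`‖v‖_{D^p} ≤ Dv`, then `‖dᵖ(v∘x)/dtᵖ‖_{L∞(ℝ)} ≤ C · Dv · C_x^p`.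
(The `l∞` norm on `ℝ^N` is the sup norm, which is the norm of `Fin N → ℝ`, and
`‖iteratedFDeriv ℝ n v y‖` is exactly the smallest `M` with
`|Dⁿv(y)[w¹,…,wⁿ]| ≤ M ‖w¹‖_{l∞} ⋯ ‖wⁿ‖_{l∞}`.) -/
theorem composite_derivative_estimate (p : ℕ) :
    ∃ C : ℝ, 0 < C ∧
      ∀ (N : ℕ) (v : (Fin N → ℝ) → ℝ) (x : ℝ → Fin N → ℝ) (Cx Dv : ℝ),
        0 < Cx → 0 ≤ Dv →
        ContDiff ℝ p v →
        (∀ n < p, Differentiable ℝ (iteratedDeriv n x)) →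
        (∀ n, 1 ≤ n → n ≤ p → ∀ (s : ℝ) (i : Fin N), |iteratedDeriv n x s i| ≤ Cx ^ n) →
        (∀ n ≤ p, ∀ y : Fin N → ℝ, ‖iteratedFDeriv ℝ n v y‖ ≤ Dv) →
        ∀ s : ℝ, |iteratedDeriv p (fun r => v (x r)) s| ≤ C * Dv * Cx ^ p := by
  refine ⟨2 ^ (p * p), by positivity, ?_⟩
  intro N v x Cx Dv hC hD hv hd hx hb s
  refine (GoodB.comp hC p hD hv hb hd ?_).iter s
  intro k h1 h2 s
  exact (pi_norm_le_iff_of_nonneg (by positivity)).2 fun i => hx k h1 h2 s i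
end

section
/- Let B : [0,T] → ℝ^{N×N} be bounded and measurable, let 1 ≤ p ≤ ∞, and let W be the mcG(q) or mdG(q) solution of the linear problem ẇ(t) + B(t)·w(t) = 0 on (0,T], w(0) = w₀ (i.e., the method applied with f(w,t) = −B(t)·w). Then there is a constant C > 0, depending only on the maximal local degree max_{i,j} q_{ij}, such that if K_n·C·‖B‖_{L∞([T_{n−1},T_n], l_p)} ≤ 1 for n = 1,…,M, then ‖W‖_{L∞([T_{n−1},T_n], l_p)} ≤ C·‖w₀‖_{l_p}·exp( Σ_{m=1}^{n−1} K_m·C·‖B‖_{L∞([T_{m−1},T_m], l_p)} ) for n = 1,…,M, where ‖B(t)‖_{l_p} denotes the operator norm induced by the l_p norm on ℝ^N. -/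
open MeasureTheory

/-- The `l_p` norm on `ℝ^N` (`1 ≤ p ≤ ∞`), realized through the `PiLp` norm. -/
noncomputable def lpNorm (p : ENNReal) {N : ℕ} (x : Fin N → ℝ) : ℝ :=
  ‖(WithLp.equiv p (∀ _ : Fin N, ℝ)).symm x‖

/-- The local intervals `I_{ij} = (t_{i,j-1}, t_{ij}]` form a partition of `(0,T]`
for each component `i`. -/
def IsPartition (N : ℕ) (T : ℝ) (M : Fin N → ℕ) (t : Fin N → ℕ → ℝ) : Prop :=
  ∀ i : Fin N, 1 ≤ M i ∧ t i 0 = 0 ∧ t i (M i) = T ∧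
    ∀ j : ℕ, 1 ≤ j → j ≤ M i → t i (j - 1) < t i j

/-- `U` is an mcG(q) solution of `u̇ = f(u,·)`, `u 0 = u₀`. -/
def IsMcG (N : ℕ) (T : ℝ) (f : (Fin N → ℝ) → ℝ → Fin N → ℝ) (u₀ : Fin N → ℝ)
    (M : Fin N → ℕ) (t : Fin N → ℕ → ℝ) (q : Fin N → ℕ → ℕ)
    (U : ℝ → Fin N → ℝ) : Prop :=
  (∀ i : Fin N, ContinuousOn (fun s => U s i) (Set.Icc 0 T)) ∧ U 0 = u₀ ∧
  ∀ (i : Fin N) (j : ℕ), 1 ≤ j → j ≤ M i →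
    ∃ P : Polynomial ℝ, P.natDegree ≤ q i j ∧
      (∀ s ∈ Set.Ioc (t i (j - 1)) (t i j), U s i = P.eval s) ∧
      ∀ w : Polynomial ℝ, w.natDegree + 1 ≤ q i j →
        (∫ s in (t i (j - 1))..(t i j), (Polynomial.derivative P).eval s * w.eval s) =
          ∫ s in (t i (j - 1))..(t i j), f (U s) s i * w.eval s

/-- `U` is an mdG(q) solution of `u̇ = f(u,·)`, `u(0⁻) = u₀`. -/
def IsMdG (N : ℕ) (T : ℝ) (f : (Fin N → ℝ) → ℝ → Fin N → ℝ) (u₀ : Fin N → ℝ)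
    (M : Fin N → ℕ) (t : Fin N → ℕ → ℝ) (q : Fin N → ℕ → ℕ)
    (U : ℝ → Fin N → ℝ) : Prop :=
  U 0 = u₀ ∧
  ∀ (i : Fin N) (j : ℕ), 1 ≤ j → j ≤ M i →
    ∃ P : Polynomial ℝ, P.natDegree ≤ q i j ∧
      (∀ s ∈ Set.Ioc (t i (j - 1)) (t i j), U s i = P.eval s) ∧
      ∀ w : Polynomial ℝ, w.natDegree ≤ q i j →
        (P.eval (t i (j - 1)) - U (t i (j - 1)) i) * w.eval (t i (j - 1)) +
            (∫ s in (t i (j - 1))..(t i j), (Polynomial.derivative P).eval s * w.eval s) =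
          ∫ s in (t i (j - 1))..(t i j), f (U s) s i * w.eval s

theorem inv_est_unit (q : ℕ) : ∃ A : ℝ, 0 < A ∧ ∀ R : Polynomial ℝ, R.natDegree ≤ q →
    ∀ s ∈ Set.Icc (0:ℝ) 1, R.eval s ^ 2 ≤ A * ∫ x in (0:ℝ)..1, x * R.eval x ^ 2 := by
  let ev : (Fin (q+1) → ℝ) → ℝ → ℝ := fun v x => ∑ k, v k * x ^ (k : ℕ)
  let F : (Fin (q+1) → ℝ) → ℝ := fun v => ∫ x in (0:ℝ)..1, x * ev v x ^ 2
  have hFc : Continuous F := by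
    apply intervalIntegral.continuous_parametric_intervalIntegral_of_continuous'
    simp only [ev, Function.uncurry_def]
    fun_prop
  have hpos : ∀ v, v ≠ 0 → 0 < F v := by
    intro v hv
    have hc : Continuous (fun x : ℝ => x * ev v x ^ 2) := by simp only [ev]; fun_prop
    apply intervalIntegral.integral_pos one_pos hc.continuousOn
    · intro x hx
      exact mul_nonneg hx.1.le (sq_nonneg _)
    by_contra hcon
    push Not at hcon
    let R : Polynomial ℝ := ∑ k : Fin (q+1), Polynomial.monomial (k : ℕ) (v k)
    have hRe : ∀ x, R.eval x = ev v x := by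
      intro x; simp [R, ev, Polynomial.eval_finsetSum]
    have hR0 : R = 0 := by
      apply Polynomial.eq_zero_of_infinite_isRoot
      refine (Set.Ioo_infinite (zero_lt_one (α := ℝ))).mono ?_
      intro x hx
      have h1 := hcon x ⟨hx.1.le, hx.2.le⟩
      have h2 : ev v x ^ 2 ≤ 0 := by
        by_contra h3
        push Not at h3
        have := mul_pos hx.1 h3
        linarith
      have h3 : ev v x = 0 := by
        have := le_antisymm h2 (sq_nonneg _)
        simpa using this
      simp [Polynomial.IsRoot, hRe, h3]
    apply hv
    ext k
    have := congrArg (fun Q => Polynomial.coeff Q (k:ℕ)) hR0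
    simpa [R, Polynomial.finsetSum_coeff, Polynomial.coeff_monomial, Fin.val_inj] using this
  have hcomp : IsCompact (Metric.sphere (0 : Fin (q+1) → ℝ) 1) := isCompact_sphere _ _
  have hne : (Metric.sphere (0 : Fin (q+1) → ℝ) 1).Nonempty := by
    refine ⟨fun _ => 1, ?_⟩
    simp
  obtain ⟨v0, hv0, hmin⟩ := hcomp.exists_isMinOn hne hFc.continuousOn
  have hm : 0 < F v0 := hpos v0 (by rintro rfl; simp at hv0)
  have hlow : ∀ v, F v0 * ‖v‖ ^ 2 ≤ F v := by
    intro v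
    by_cases hv : v = 0
    · subst hv; simp [F, ev]
    have hn : 0 < ‖v‖ := norm_pos_iff.2 hv
    have h1 : F v0 ≤ F (‖v‖⁻¹ • v) := hmin (by simp [norm_smul, hn.ne'])
    have h2 : F (‖v‖⁻¹ • v) = (‖v‖⁻¹) ^ 2 * F v := by
      simp only [F]
      rw [← intervalIntegral.integral_const_mul]
      congr 1; ext x
      have : ev (‖v‖⁻¹ • v) x = ‖v‖⁻¹ * ev v x := by
        simp [ev, Finset.mul_sum, mul_assoc]
      rw [this]; ring
    rw [h2] at h1
    calc F v0 * ‖v‖ ^ 2 ≤ (‖v‖⁻¹) ^ 2 * F v * ‖v‖ ^ 2 := by gcongr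
      _ = F v := by field_simp
  refine ⟨(q+1)^2 / F v0, by positivity, ?_⟩
  intro R hR s hs
  let v : Fin (q+1) → ℝ := fun k => R.coeff k
  have hev : ∀ x, R.eval x = ev v x := by
    intro x
    rw [Polynomial.eval_eq_sum_range' (Nat.lt_succ_of_le hR), Finset.sum_range]
  have hF : (∫ x in (0:ℝ)..1, x * R.eval x ^ 2) = F v := by simp only [F, hev]
  have hb : |ev v s| ≤ (q+1) * ‖v‖ := by
    calc |ev v s| ≤ ∑ k : Fin (q+1), |v k * s ^ (k:ℕ)| := Finset.abs_sum_le_sum_abs _ _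
      _ ≤ ∑ k : Fin (q+1), ‖v‖ := by
        apply Finset.sum_le_sum
        intro k _
        rw [abs_mul, abs_of_nonneg (pow_nonneg hs.1 _)]
        have h1 := norm_le_pi_norm v k
        have h2 : s ^ (k:ℕ) ≤ 1 := pow_le_one₀ hs.1 hs.2
        calc |v k| * s ^ (k:ℕ) ≤ |v k| * 1 := by gcongr
          _ ≤ ‖v‖ := by simpa using h1
      _ = (q+1) * ‖v‖ := by simp
  rw [hF, hev, ← sq_abs]
  calc |ev v s| ^ 2 ≤ ((q+1) * ‖v‖) ^ 2 := by gcongr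
    _ = (q+1)^2 / F v0 * (F v0 * ‖v‖^2) := by field_simp
    _ ≤ _ := by gcongr; exact hlow v

theorem inv_est (q : ℕ) : ∃ A : ℝ, 0 < A ∧ ∀ R : Polynomial ℝ, R.natDegree ≤ q →
    ∀ a b : ℝ, a < b → ∀ s ∈ Set.Icc a b,
      (R.eval s * (b - a)) ^ 2 ≤ A * ∫ x in a..b, (x - a) * R.eval x ^ 2 := by
  obtain ⟨A, hA, h⟩ := inv_est_unit q
  refine ⟨A, hA, ?_⟩
  intro R hR a b hab s hs
  let Q := R.comp (Polynomial.C (b - a) * Polynomial.X + Polynomial.C a)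
  have hba : 0 < b - a := sub_pos.2 hab
  have hQ : Q.natDegree ≤ q := by
    refine Polynomial.natDegree_comp_le.trans ?_
    calc R.natDegree * _ ≤ R.natDegree * 1 := by
          gcongr; exact Polynomial.natDegree_linear_le
      _ ≤ q := by simpa using hR
  have hQe : ∀ x, Q.eval x = R.eval ((b-a) * x + a) := by intro x; simp [Q]
  have h1 := h Q hQ ((s - a)/(b-a)) ⟨div_nonneg (by linarith [hs.1]) hba.le,
    (div_le_one hba).2 (by linarith [hs.2])⟩
  have h2 : (b-a) * ((s - a)/(b-a)) + a = s := by field_simp; ring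
  rw [hQe, h2] at h1
  have h3 := intervalIntegral.smul_integral_comp_mul_add (a := 0) (b := 1)
    (fun x => (x - a) * R.eval x ^ 2) (b - a) a
  have h4 : (b - a) * 0 + a = a := by ring
  have h5 : (b - a) * 1 + a = b := by ring
  rw [h4, h5] at h3
  have h6 : (∫ x in (0:ℝ)..1, ((b-a) * x + a - a) * R.eval ((b-a) * x + a) ^ 2)
      = (b - a) * ∫ x in (0:ℝ)..1, x * Q.eval x ^ 2 := by
    rw [← intervalIntegral.integral_const_mul]
    congr 1; ext x; rw [hQe]; ring
  rw [h6, smul_eq_mul] at h3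
  rw [← h3, mul_pow]
  calc _ ≤ (A * ∫ x in (0:ℝ)..1, x * Q.eval x ^ 2) * (b-a)^2 := by gcongr
    _ = _ := by ring

/-- oscillation bound from a weighted energy bound -/
theorem osc_bound (A : ℝ) (hA : 0 < A) (P : Polynomial ℝ) (a b F : ℝ) (hab : a < b)
    (hinv : ∀ s ∈ Set.Icc a b, (P.derivative.eval s * (b - a)) ^ 2 ≤
      A * ∫ x in a..b, (x - a) * P.derivative.eval x ^ 2)
    (hF : ∀ D : ℝ, (∀ s ∈ Set.Icc a b, |P.derivative.eval s| ≤ D) →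
      (∫ x in a..b, (x - a) * P.derivative.eval x ^ 2) ≤ (b - a) * (D * F)) :
    ∀ s ∈ Set.Icc a b, ∀ r ∈ Set.Icc a b, |P.eval s - P.eval r| ≤ A * F := by
  have hba : 0 < b - a := sub_pos.2 hab
  obtain ⟨s0, hs0, hmax⟩ := (isCompact_Icc (a := a) (b := b)).exists_isMaxOn
    ⟨a, Set.left_mem_Icc.2 hab.le⟩ (f := fun s => |P.derivative.eval s|)
    (by fun_prop)
  set D := |P.derivative.eval s0| with hD
  have hDn : 0 ≤ D := abs_nonneg _
  have hF0 : 0 ≤ F := by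
    have h0 : 0 ≤ ∫ x in a..b, (x - a) * P.derivative.eval x ^ 2 := by
      apply intervalIntegral.integral_nonneg hab.le
      intro x hx
      exact mul_nonneg (by linarith [hx.1]) (sq_nonneg _)
    have := hF (D + 1) (fun s hs => (hmax hs).trans (by simp [hD]))
    have h3 : 0 ≤ (b-a) * ((D+1) * F) := h0.trans this
    have : 0 < (b - a) * (D + 1) := by positivity
    by_contra hneg
    push Not at hneg
    nlinarith
  have h1 : (D * (b-a))^2 ≤ A * ((b - a) * (D * F)) := by
    have := hinv s0 hs0
    rw [mul_pow, ← sq_abs, ← hD, ← mul_pow] at this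
    refine this.trans ?_
    gcongr
    exact hF D (fun s hs => hmax hs)
  have h2 : D * (b - a) ≤ A * F := by
    rcases hDn.eq_or_lt with h | h
    · rw [← h]; simp; positivity
    · have : 0 < D * (b-a) := by positivity
      nlinarith
  intro s hs r hr
  have := (convex_Icc a b).norm_image_sub_le_of_norm_hasDerivWithin_le (f := fun x => P.eval x)
    (f' := fun x => P.derivative.eval x) (C := D)
    (fun x _ => (P.hasDerivAt x).hasDerivWithinAt) (fun x hx => hmax hx) hr hs
  simp only [Real.norm_eq_abs] at this
  refine this.trans (le_trans ?_ h2)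
  gcongr
  rw [abs_le]; constructor <;> linarith [hs.1, hs.2, hr.1, hr.2]

theorem int_mul_poly_le (f : ℝ → ℝ) (g : Polynomial ℝ) (a b D : ℝ) (hab : a < b)
    (hf : IntervalIntegrable f volume a b) (hg : ∀ s ∈ Set.Icc a b, |g.eval s| ≤ D) :
    |∫ s in a..b, f s * g.eval s| ≤ D * ∫ s in a..b, |f s| := by
  refine (intervalIntegral.abs_integral_le_integral_abs hab.le).trans ?_
  rw [← intervalIntegral.integral_const_mul]
  apply intervalIntegral.integral_mono_on hab.le
  · exact (hf.mul_continuousOn g.continuous.continuousOn).abs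
  · exact hf.abs.const_mul _
  · intro x hx
    rw [abs_mul, mul_comm]
    gcongr
    exact hg x hx

theorem local_mcG (A : ℝ) (hA : 0 < A) (qmax q : ℕ) (hq : q ≤ qmax)
    (hinv : ∀ R : Polynomial ℝ, R.natDegree ≤ qmax →
    ∀ a b : ℝ, a < b → ∀ s ∈ Set.Icc a b,
      (R.eval s * (b - a)) ^ 2 ≤ A * ∫ x in a..b, (x - a) * R.eval x ^ 2)
    (P : Polynomial ℝ) (hP : P.natDegree ≤ q) (f : ℝ → ℝ) (a b : ℝ) (hab : a < b)
    (hf : IntervalIntegrable f volume a b)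
    (h : ∀ w : Polynomial ℝ, w.natDegree + 1 ≤ q →
        (∫ s in a..b, P.derivative.eval s * w.eval s) = ∫ s in a..b, f s * w.eval s) :
    |P.eval b - P.eval a| ≤ (∫ s in a..b, |f s|) ∧
    ∀ s ∈ Set.Icc a b, |P.eval s - P.eval a| ≤ (1 + A) * ∫ s in a..b, |f s| := by
  have hF0 : 0 ≤ ∫ s in a..b, |f s| :=
    intervalIntegral.integral_nonneg hab.le (fun _ _ => abs_nonneg _)
  rcases Nat.eq_zero_or_pos q with h0 | h0
  · have : P = Polynomial.C (P.coeff 0) := Polynomial.eq_C_of_natDegree_eq_zero (by omega)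
    rw [this]
    simp only [Polynomial.eval_C, sub_self, abs_zero]
    exact ⟨hF0, fun _ _ => by positivity⟩
  have hPd : P.derivative.natDegree + 1 ≤ q := by
    have := P.natDegree_derivative_le
    omega
  have hftc : (∫ s in a..b, P.derivative.eval s) = P.eval b - P.eval a :=
    intervalIntegral.integral_eq_sub_of_hasDerivAt (fun x _ => P.hasDerivAt x)
      (Continuous.intervalIntegrable (by fun_prop) _ _)
  constructor
  · have := h 1 (by simpa using Nat.succ_le_of_lt h0)
    simp only [Polynomial.eval_one, mul_one] at this
    rw [← hftc, this]
    exact intervalIntegral.abs_integral_le_integral_abs hab.le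
  intro s hs
  refine (osc_bound A hA P a b (∫ s in a..b, |f s|) hab (hinv _ (by omega) a b hab) ?_ s hs a
    (Set.left_mem_Icc.2 hab.le)).trans (by nlinarith)
  intro D hD
  have h1 := h P.derivative hPd
  have h2 := (le_abs_self _).trans (int_mul_poly_le f P.derivative a b D hab hf hD)
  rw [← h1] at h2
  calc (∫ x in a..b, (x - a) * P.derivative.eval x ^ 2)
      ≤ ∫ x in a..b, (b - a) * (P.derivative.eval x * P.derivative.eval x) := by
        apply intervalIntegral.integral_mono_on hab.le
        · exact Continuous.intervalIntegrable (by fun_prop) _ _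
        · exact Continuous.intervalIntegrable (by fun_prop) _ _
        · intro x hx
          nlinarith [sq_nonneg (P.derivative.eval x), hx.2]
    _ ≤ _ := by
      rw [intervalIntegral.integral_const_mul]
      have := sub_pos.2 hab
      gcongr

theorem local_mdG (A : ℝ) (hA : 0 < A) (qmax q : ℕ) (hq : q ≤ qmax)
    (hinv : ∀ R : Polynomial ℝ, R.natDegree ≤ qmax →
    ∀ a b : ℝ, a < b → ∀ s ∈ Set.Icc a b,
      (R.eval s * (b - a)) ^ 2 ≤ A * ∫ x in a..b, (x - a) * R.eval x ^ 2)
    (P : Polynomial ℝ) (hP : P.natDegree ≤ q) (f : ℝ → ℝ) (u a b : ℝ) (hab : a < b)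
    (hf : IntervalIntegrable f volume a b)
    (h : ∀ w : Polynomial ℝ, w.natDegree ≤ q →
        (P.eval a - u) * w.eval a +
        (∫ s in a..b, P.derivative.eval s * w.eval s) = ∫ s in a..b, f s * w.eval s) :
    |P.eval b - u| ≤ (∫ s in a..b, |f s|) ∧
    ∀ s ∈ Set.Icc a b, |P.eval s - u| ≤ (1 + A) * ∫ s in a..b, |f s| := by
  have hF0 : 0 ≤ ∫ s in a..b, |f s| :=
    intervalIntegral.integral_nonneg hab.le (fun _ _ => abs_nonneg _)
  have hba := sub_pos.2 hab
  have hftc : (∫ s in a..b, P.derivative.eval s) = P.eval b - P.eval a :=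
    intervalIntegral.integral_eq_sub_of_hasDerivAt (fun x _ => P.hasDerivAt x)
      (Continuous.intervalIntegrable (by fun_prop) _ _)
  have hb : |P.eval b - u| ≤ (∫ s in a..b, |f s|) := by
    have := h 1 (by simp)
    simp only [Polynomial.eval_one, mul_one] at this
    rw [hftc] at this
    have h2 : P.eval b - u = ∫ s in a..b, f s := by linarith
    rw [h2]
    exact intervalIntegral.abs_integral_le_integral_abs hab.le
  refine ⟨hb, ?_⟩
  intro s hs
  have key := osc_bound A hA P a b (∫ s in a..b, |f s|) hab
    (hinv _ (by have := P.natDegree_derivative_le; omega) a b hab) ?_ s hs b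
    (Set.right_mem_Icc.2 hab.le)
  · have : P.eval s - u = (P.eval s - P.eval b) + (P.eval b - u) := by ring
    rw [this]
    refine (abs_add_le _ _).trans ?_
    linarith
  intro D hD
  let w := (Polynomial.X - Polynomial.C a) * P.derivative
  have hw : w.natDegree ≤ q := by
    rcases Nat.eq_zero_or_pos q with h0 | h0
    · have : P = Polynomial.C (P.coeff 0) := Polynomial.eq_C_of_natDegree_eq_zero (by omega)
      have h3 : w = 0 := by simp only [w]; rw [this]; simp
      rw [h3]; simp
    · refine Polynomial.natDegree_mul_le.trans ?_
      have := P.natDegree_derivative_le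
      have h3 := Polynomial.natDegree_X_sub_C (R := ℝ) a
      omega
  have h1 := h w hw
  have hwe : ∀ x, w.eval x = (x - a) * P.derivative.eval x := by intro x; simp [w]
  have h2 := (le_abs_self _).trans (int_mul_poly_le f w a b ((b - a) * D) hab hf (by
    intro x hx
    rw [hwe, abs_mul, abs_of_nonneg (by linarith [hx.1])]
    have := hD x hx
    gcongr
    exact hx.2))
  rw [← h1, hwe] at h2
  simp only [sub_self, zero_mul, mul_zero, zero_add] at h2
  calc (∫ x in a..b, (x - a) * P.derivative.eval x ^ 2)
      = ∫ x in a..b, P.derivative.eval x * w.eval x := by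
        congr 1; ext x; rw [hwe]; ring
    _ ≤ _ := by linarith

theorem piLp_norm_mono (p : ENNReal) [Fact (1 ≤ p)] {N : ℕ} (x y : PiLp p (fun _ : Fin N => ℝ))
    (h : ∀ i, |x i| ≤ |y i|) : ‖x‖ ≤ ‖y‖ := by
  rcases eq_or_ne p ⊤ with rfl | hp
  · rw [PiLp.norm_eq_ciSup, PiLp.norm_eq_ciSup]
    exact ciSup_mono (Set.finite_range _).bddAbove h
  · have h1 : 0 < p.toReal := ENNReal.toReal_pos (by
      have : (1:ENNReal) ≤ p := Fact.out
      exact (lt_of_lt_of_le one_pos this).ne') hp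
    rw [PiLp.norm_eq_sum h1, PiLp.norm_eq_sum h1]
    simp only [Real.norm_eq_abs]
    apply Real.rpow_le_rpow (Finset.sum_nonneg fun i _ => by positivity) _ (by positivity)
    exact Finset.sum_le_sum fun i _ => Real.rpow_le_rpow (abs_nonneg _) (h i) h1.le

theorem slab_vec (p : ENNReal) (hp : 1 ≤ p) {N : ℕ} (W g : ℝ → Fin N → ℝ) (a b C' CB : ℝ)
    (hab : a < b) (hC' : 0 ≤ C') (hCB : 0 ≤ CB)
    (hW : ∀ i, IntervalIntegrable (fun s => W s i) volume a b)
    (hg : ∀ i, IntervalIntegrable (fun s => g s i) volume a b)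
    (hgW : ∀ s ∈ Set.Icc a b, _root_.lpNorm p (g s) ≤ CB * _root_.lpNorm p (W s))
    (hb : ∀ s ∈ Set.Icc a b, ∀ i, |W s i - W a i| ≤ C' * ∫ x in a..b, |g x i|)
    (hsmall : (b - a) * (2 * C') * CB ≤ 1) :
    ∀ s ∈ Set.Icc a b, _root_.lpNorm p (W s) ≤
      (1 + (b - a) * (2 * C') * CB) * _root_.lpNorm p (W a) := by
  haveI : Fact (1 ≤ p) := ⟨hp⟩
  let V : ℝ → PiLp p (fun _ : Fin N => ℝ) := fun s => WithLp.toLp p (W s)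
  let G : ℝ → PiLp p (fun _ : Fin N => ℝ) := fun s => WithLp.toLp p (fun i => |g s i|)
  have hVn : ∀ s, _root_.lpNorm p (W s) = ‖V s‖ := fun s => rfl
  have hGn : ∀ s, ‖G s‖ ≤ _root_.lpNorm p (g s) := fun s =>
    piLp_norm_mono p (G s) (WithLp.toLp p (g s)) (fun i => by simp [G])
  have hVi : IntegrableOn V (Set.Ioc a b) volume := by
    apply Integrable.of_eval_piLp
    intro i
    exact (intervalIntegrable_iff_integrableOn_Ioc_of_le hab.le).1 (hW i)
  have hGi' : ∀ i, IntegrableOn (fun s => G s i) (Set.Ioc a b) volume := by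
    intro i
    exact (intervalIntegrable_iff_integrableOn_Ioc_of_le hab.le).1 (hg i).abs
  have hGi : IntegrableOn G (Set.Ioc a b) volume := Integrable.of_eval_piLp hGi'
  set I := ∫ s in Set.Ioc a b, ‖V s‖ with hI
  have hI0 : 0 ≤ I := integral_nonneg fun _ => norm_nonneg _
  have hGV : ‖∫ s in Set.Ioc a b, G s‖ ≤ CB * I := by
    refine (norm_integral_le_integral_norm _).trans ?_
    rw [hI, ← integral_const_mul]
    apply setIntegral_mono_on hGi.norm (hVi.norm.const_mul _) measurableSet_Ioc
    intro x hx
    exact (hGn x).trans (hgW x ⟨hx.1.le, hx.2⟩)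
  have hdiff : ∀ s ∈ Set.Icc a b, ‖V s‖ ≤ ‖V a‖ + C' * (CB * I) := by
    intro s hs
    have h1 : ‖V s - V a‖ ≤ ‖C' • ∫ s in Set.Ioc a b, G s‖ := by
      apply piLp_norm_mono
      intro i
      have h2 := hb s hs i
      rw [intervalIntegral.integral_of_le hab.le] at h2
      have h3 : (∫ s in Set.Ioc a b, G s) i = ∫ s in Set.Ioc a b, |g s i| :=
        eval_integral_piLp hGi' i
      have h4 : (V s - V a) i = W s i - W a i := by simp [V]
      rw [h4, PiLp.smul_apply, h3, smul_eq_mul]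
      exact h2.trans (le_abs_self _)
    rw [norm_smul, Real.norm_of_nonneg hC'] at h1
    have h5 : ‖V s‖ ≤ ‖V a‖ + ‖V s - V a‖ := by
      have := norm_add_le (V a) (V s - V a)
      simpa using this
    have h6 := mul_le_mul_of_nonneg_left hGV hC'
    linarith
  have hba := sub_pos.2 hab
  have hIb : I ≤ (b - a) * (‖V a‖ + C' * (CB * I)) := by
    have h1 : I ≤ ∫ s in Set.Ioc a b, (‖V a‖ + C' * (CB * I)) := by
      rw [hI]
      apply setIntegral_mono_on hVi.norm _ measurableSet_Ioc
      · intro x hx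
        exact hdiff x ⟨hx.1.le, hx.2⟩
      · exact integrableOn_const (by simp)
    refine h1.trans (le_of_eq ?_)
    simp [hab.le]
  have hI2 : I ≤ 2 * (b - a) * ‖V a‖ := by
    have : (b - a) * (C' * (CB * I)) ≤ 1 / 2 * I := by
      have := mul_le_mul_of_nonneg_right hsmall hI0
      linarith
    linarith
  intro s hs
  rw [hVn, hVn]
  have h1 := hdiff s hs
  have h2 : C' * (CB * I) ≤ C' * (CB * (2 * (b - a) * ‖V a‖)) := by gcongr
  linarith

theorem steps_mono (f : ℕ → ℝ) (M : ℕ) (h : ∀ j, 1 ≤ j → j ≤ M → f (j - 1) < f j) :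
    ∀ m n, m ≤ n → n ≤ M → f m ≤ f n := by
  intro m n hmn
  induction n, hmn using Nat.le_induction with
  | base => intro _; exact le_rfl
  | succ n hmn ih =>
    intro hn
    have := h (n+1) (by omega) hn
    simp only [Nat.add_sub_cancel] at this
    exact (ih (by omega)).trans this.le

theorem steps_find (f : ℕ → ℝ) (s : ℝ) (h0 : f 0 < s) :
    ∀ n, s ≤ f n → ∃ j, 1 ≤ j ∧ j ≤ n ∧ s ∈ Set.Ioc (f (j - 1)) (f j) := by
  intro n
  induction n with
  | zero => intro h; linarith
  | succ n ih =>
    intro h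
    by_cases hs : s ≤ f n
    · obtain ⟨j, h1, h2, h3⟩ := ih hs
      exact ⟨j, h1, by omega, h3⟩
    · exact ⟨n+1, by omega, le_rfl, by simpa using hs, h⟩

/-- One-component slab bound. -/
theorem comp_slab (T : ℝ) (M : ℕ) (t : ℕ → ℝ) (Msl : ℕ) (Tlev : ℕ → ℝ) (C' : ℝ) (hC' : 1 ≤ C')
    (u g : ℝ → ℝ) (ht0 : t 0 = 0) (htM : t M = T)
    (ht : ∀ j, 1 ≤ j → j ≤ M → t (j - 1) < t j)
    (hT0 : Tlev 0 = 0) (hTM : Tlev Msl = T)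
    (hT : ∀ n, 1 ≤ n → n ≤ Msl → Tlev (n - 1) < Tlev n)
    (hsync : ∀ j, 1 ≤ j → j ≤ M →
      ∃ n : ℕ, 1 ≤ n ∧ n ≤ Msl ∧ Tlev (n - 1) ≤ t (j - 1) ∧ t j ≤ Tlev n)
    (hg : IntervalIntegrable g volume 0 T)
    (h1 : ∀ j, 1 ≤ j → j ≤ M → |u (t j) - u (t (j-1))| ≤ ∫ s in (t (j-1))..(t j), |g s|)
    (h2 : ∀ j, 1 ≤ j → j ≤ M → ∀ s ∈ Set.Ioc (t (j-1)) (t j),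
      |u s - u (t (j-1))| ≤ C' * ∫ s in (t (j-1))..(t j), |g s|) :
    ∀ n, 1 ≤ n → n ≤ Msl → ∀ s ∈ Set.Icc (Tlev (n - 1)) (Tlev n),
      |u s - u (Tlev (n - 1))| ≤ C' * ∫ x in (Tlev (n-1))..(Tlev n), |g x| := by
  have tm := steps_mono t M ht
  have Tm := steps_mono Tlev Msl hT
  have htr : ∀ j, j ≤ M → 0 ≤ t j ∧ t j ≤ T := fun j hj =>
    ⟨ht0 ▸ tm 0 j (Nat.zero_le _) hj, htM ▸ tm j M hj le_rfl⟩
  have hTr : ∀ j, j ≤ Msl → 0 ≤ Tlev j ∧ Tlev j ≤ T := fun j hj =>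
    ⟨hT0 ▸ Tm 0 j (Nat.zero_le _) hj, hTM ▸ Tm j Msl hj le_rfl⟩
  have hgs : ∀ x y, 0 ≤ x → x ≤ T → 0 ≤ y → y ≤ T →
      IntervalIntegrable (fun s => |g s|) volume x y := by
    intro x y hx hx' hy hy'
    refine hg.abs.mono_set ?_
    have hT0' : 0 ≤ T := hx.trans hx'
    rw [Set.uIcc_of_le hT0']
    exact Set.uIcc_subset_Icc ⟨hx, hx'⟩ ⟨hy, hy'⟩
  have hnode : ∀ k j, k ≤ j → j ≤ M → |u (t j) - u (t k)| ≤ ∫ s in (t k)..(t j), |g s| := by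
    intro k j hkj
    induction j, hkj using Nat.le_induction with
    | base => intro _; simp
    | succ j hkj ih =>
      intro hj
      have e1 := ih (by omega)
      have e2 := h1 (j+1) (by omega) hj
      simp only [Nat.add_sub_cancel] at e2
      have r1 := htr k (by omega)
      have r2 := htr j (by omega)
      have r3 := htr (j+1) hj
      rw [← intervalIntegral.integral_add_adjacent_intervals
        (hgs _ _ r1.1 r1.2 r2.1 r2.2) (hgs _ _ r2.1 r2.2 r3.1 r3.2)]
      have : u (t (j+1)) - u (t k) = (u (t (j+1)) - u (t j)) + (u (t j) - u (t k)) := by ring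
      rw [this]
      refine (abs_add_le _ _).trans ?_
      linarith
  have hsame : ∀ n j s, 1 ≤ n → n ≤ Msl → 1 ≤ j → j ≤ M → Tlev (n-1) < s → s ≤ Tlev n →
      s ∈ Set.Ioc (t (j-1)) (t j) → Tlev (n-1) ≤ t (j-1) ∧ t j ≤ Tlev n := by
    intro n j s hn hn' hj hj' hs hs' hsj
    obtain ⟨m, hm, hm', e1, e2⟩ := hsync j hj hj'
    have : m = n := by
      rcases lt_trichotomy m n with h | h | h
      · have := Tm m (n-1) (by omega) (by omega)
        linarith [hsj.2]
      · exact h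
      · have := Tm n (m-1) (by omega) (by omega)
        linarith [hsj.1]
    subst this
    exact ⟨e1, e2⟩
  have hTnode : ∀ n, n ≤ Msl → ∃ k, k ≤ M ∧ t k = Tlev n := by
    intro n hn
    rcases Nat.eq_zero_or_pos n with h | h
    · exact ⟨0, Nat.zero_le _, by rw [h, ht0, hT0]⟩
    have hlt := hT n h hn
    have hpos : t 0 < Tlev n := by
      rw [ht0]; exact lt_of_le_of_lt (hTr (n-1) (by omega)).1 hlt
    obtain ⟨j, hj, hj', hs⟩ := steps_find t (Tlev n) hpos M (by rw [htM]; exact (hTr n hn).2)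
    exact ⟨j, hj', le_antisymm (hsame n j _ h hn hj hj' hlt le_rfl hs).2 hs.2⟩
  intro n hn hn' s hs
  have hlt := hT n hn hn'
  have hI0 : ∀ x y, x ≤ y → 0 ≤ ∫ s in x..y, |g s| := fun x y hxy =>
    intervalIntegral.integral_nonneg hxy (fun _ _ => abs_nonneg _)
  rcases hs.1.eq_or_lt with h | h
  · rw [← h, sub_self, abs_zero]
    have := hI0 _ _ hlt.le
    positivity
  have hpos : t 0 < s := by
    rw [ht0]; exact lt_of_le_of_lt (hTr (n-1) (by omega)).1 h
  obtain ⟨j, hj, hj', hsj⟩ := steps_find t s hpos M (by rw [htM]; exact hs.2.trans (hTr n hn').2)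
  obtain ⟨e1, e2⟩ := hsame n j s hn hn' hj hj' h hs.2 hsj
  obtain ⟨k, hk, hkT⟩ := hTnode (n-1) (by omega)
  have hkj : k ≤ j - 1 := by
    by_contra hc
    have := tm j k (by omega) hk
    linarith [hsj.2]
  have b1 := hnode k (j-1) hkj (by omega)
  have b2 := h2 j hj hj' s hsj
  rw [hkT] at b1
  have r1 := hTr (n-1) (by omega)
  have r2 := htr (j-1) (by omega)
  have r3 := htr j hj'
  have r4 := hTr n hn'
  have s1 := intervalIntegral.integral_add_adjacent_intervals
        (hgs _ _ r1.1 r1.2 r2.1 r2.2) (hgs _ _ r2.1 r2.2 r3.1 r3.2)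
  have s2 := intervalIntegral.integral_add_adjacent_intervals
        (hgs _ _ r1.1 r1.2 r3.1 r3.2) (hgs _ _ r3.1 r3.2 r4.1 r4.2)
  have p1 := hI0 _ _ e1
  have p2 := hI0 _ _ e2
  have : u s - u (Tlev (n-1)) = (u s - u (t (j-1))) + (u (t (j-1)) - u (Tlev (n-1))) := by ring
  rw [this]
  refine (abs_add_le _ _).trans ?_
  rw [← s2, ← s1]
  nlinarith

theorem stab_main (qmax : ℕ) :
    ∃ C' : ℝ, 1 ≤ C' ∧
      ∀ (N : ℕ) (T : ℝ) (B : ℝ → Fin N → Fin N → ℝ) (w₀ : Fin N → ℝ)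
        (M : Fin N → ℕ) (t : Fin N → ℕ → ℝ) (q : Fin N → ℕ → ℕ) (W : ℝ → Fin N → ℝ),
        0 < T → IsPartition N T M t →
        (∀ (i : Fin N) (j : ℕ), 1 ≤ j → j ≤ M i → q i j ≤ qmax) →
        Measurable B →
        (∃ c : ℝ, ∀ (s : ℝ) (i l : Fin N), |B s i l| ≤ c) →
        (IsMcG N T (fun x s i => -∑ l, B s i l * x l) w₀ M t q W ∨
         IsMdG N T (fun x s i => -∑ l, B s i l * x l) w₀ M t q W) →
        W 0 = w₀ ∧ (∀ i, IntervalIntegrable (fun s => W s i) volume 0 T) ∧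
        (∀ i, IntervalIntegrable (fun s => -∑ l, B s i l * W s l) volume 0 T) ∧
        ∀ i, (∀ j, 1 ≤ j → j ≤ M i → |W (t i j) i - W (t i (j-1)) i| ≤
            ∫ s in (t i (j-1))..(t i j), |-∑ l, B s i l * W s l|) ∧
          (∀ j, 1 ≤ j → j ≤ M i → ∀ s ∈ Set.Ioc (t i (j-1)) (t i j),
            |W s i - W (t i (j-1)) i| ≤
            C' * ∫ s in (t i (j-1))..(t i j), |-∑ l, B s i l * W s l|) := by
  obtain ⟨A, hA, hinv⟩ := inv_est qmax
  refine ⟨1 + A, by linarith, ?_⟩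
  intro N T B w₀ M t q W hT hpart hq hBm hBb hW
  have hpoly : ∀ (i : Fin N) (j : ℕ), 1 ≤ j → j ≤ M i → ∃ P : Polynomial ℝ,
      ∀ s ∈ Set.Ioc (t i (j - 1)) (t i j), W s i = P.eval s := by
    intro i j hj hj'
    rcases hW with h | h
    · obtain ⟨P, _, h2, _⟩ := h.2.2 i j hj hj'
      exact ⟨P, h2⟩
    · obtain ⟨P, _, h2, _⟩ := h.2 i j hj hj'
      exact ⟨P, h2⟩
  have hWi : ∀ i, IntervalIntegrable (fun s => W s i) volume 0 T := by
    intro i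
    obtain ⟨hM, ht0, htM, ht⟩ := hpart i
    rw [← ht0, ← htM]
    apply IntervalIntegrable.trans_iterate
    intro k hk
    obtain ⟨P, hP⟩ := hpoly i (k+1) (by omega) (by omega)
    have hlt := ht (k+1) (by omega) (by omega)
    simp only [Nat.add_sub_cancel] at hP hlt
    have hPi : IntervalIntegrable (fun s => P.eval s) volume (t i k) (t i (k+1)) :=
      P.continuous.intervalIntegrable _ _
    refine hPi.congr ?_
    intro s hs
    rw [Set.uIoc_of_le hlt.le] at hs
    exact (hP s hs).symm
  have hgi : ∀ i, IntervalIntegrable (fun s => -∑ l, B s i l * W s l) volume 0 T := by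
    intro i
    obtain ⟨c, hc⟩ := hBb
    rw [intervalIntegrable_iff_integrableOn_Ioc_of_le hT.le]
    apply Integrable.neg
    apply integrable_finsetSum
    intro l _
    apply Integrable.bdd_mul (c := c)
    · exact (intervalIntegrable_iff_integrableOn_Ioc_of_le hT.le).1 (hWi l)
    · exact (((measurable_pi_apply l).comp (measurable_pi_apply i)).comp hBm).aestronglyMeasurable
    · exact Filter.Eventually.of_forall fun s => hc s i l
  have h0 : W 0 = w₀ := by
    rcases hW with h | h
    · exact h.2.1
    · exact h.1
  refine ⟨h0, hWi, hgi, ?_⟩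
  intro i
  obtain ⟨hM, ht0, htM, ht⟩ := hpart i
  have tm := steps_mono (t i) (M i) ht
  suffices H : ∀ j, 1 ≤ j → j ≤ M i → |W (t i j) i - W (t i (j-1)) i| ≤
            (∫ s in (t i (j-1))..(t i j), |-∑ l, B s i l * W s l|) ∧
          (∀ s ∈ Set.Ioc (t i (j-1)) (t i j),
            |W s i - W (t i (j-1)) i| ≤
            (1 + A) * ∫ s in (t i (j-1))..(t i j), |-∑ l, B s i l * W s l|) from
    ⟨fun j hj hj' => (H j hj hj').1, fun j hj hj' => (H j hj hj').2⟩
  intro j hj hj'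
  have hlt := ht j hj hj'
  have ha0 : 0 ≤ t i (j-1) := ht0 ▸ tm 0 (j-1) (Nat.zero_le _) (by omega)
  have hbT : t i j ≤ T := htM ▸ tm j (M i) hj' le_rfl
  have hgl : IntervalIntegrable (fun s => -∑ l, B s i l * W s l) volume (t i (j-1)) (t i j) := by
    refine (hgi i).mono_set ?_
    rw [Set.uIcc_of_le hT.le, Set.uIcc_of_le hlt.le]
    exact Set.Icc_subset_Icc ha0 hbT
  have hbm : t i j ∈ Set.Ioc (t i (j-1)) (t i j) := ⟨hlt, le_rfl⟩
  rcases hW with h | h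
  · obtain ⟨P, hP1, hP2, hP3⟩ := h.2.2 i j hj hj'
    have hPa : W (t i (j-1)) i = P.eval (t i (j-1)) := by
      have c1 : Filter.Tendsto (fun s => W s i) (nhdsWithin (t i (j-1)) (Set.Ioc (t i (j-1)) (t i j)))
          (nhds (W (t i (j-1)) i)) := by
        have := h.1 i (t i (j-1)) ⟨ha0, by linarith⟩
        exact this.mono_left (nhdsWithin_mono _ (fun x hx => ⟨ha0.trans hx.1.le, hx.2.trans hbT⟩))
      have c2 : Filter.Tendsto (fun s => W s i) (nhdsWithin (t i (j-1)) (Set.Ioc (t i (j-1)) (t i j)))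
          (nhds (P.eval (t i (j-1)))) := by
        refine Filter.Tendsto.congr' ?_ (P.continuous.continuousAt.tendsto.mono_left nhdsWithin_le_nhds)
        filter_upwards [self_mem_nhdsWithin] with s hs
        exact (hP2 s hs).symm
      haveI : (nhdsWithin (t i (j-1)) (Set.Ioc (t i (j-1)) (t i j))).NeBot := by
        rw [nhdsWithin_Ioc_eq_nhdsGT hlt]; infer_instance
      exact tendsto_nhds_unique c1 c2
    have key := local_mcG A hA qmax (q i j) (hq i j hj hj') hinv P hP1 _ _ _ hlt hgl hP3
    rw [hPa, hP2 _ hbm]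
    refine ⟨key.1, fun s hs => ?_⟩
    rw [hP2 s hs]
    exact key.2 s ⟨hs.1.le, hs.2⟩
  · obtain ⟨P, hP1, hP2, hP3⟩ := h.2 i j hj hj'
    have key := local_mdG A hA qmax (q i j) (hq i j hj hj') hinv P hP1 _ _ _ _ hlt hgl hP3
    rw [hP2 _ hbm]
    refine ⟨key.1, fun s hs => ?_⟩
    rw [hP2 s hs]
    exact key.2 s ⟨hs.1.le, hs.2⟩

/-- Stability estimate (Theorem 4.2): let `W` be the mcG(q) or mdG(q) solution of the
linear problem `ẇ + B w = 0`, `w 0 = w₀`, with `B` bounded and measurable. There is a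
constant `C > 0`, depending only on the maximal local degree, such that if
`K_n · C · ‖B‖_{L∞([T_{n-1},T_n],l_p)} ≤ 1` for every time slab, then
`‖W‖_{L∞([T_{n-1},T_n],l_p)} ≤ C ‖w₀‖_{l_p} exp(∑_{m=1}^{n-1} K_m C ‖B‖_{L∞([T_{m-1},T_m],l_p)})`,
where `CB n` is any upper bound for the `l_p` operator norm of `B` on the `n`-th slab. -/
theorem stability_estimate (qmax : ℕ) :
    ∃ C : ℝ, 0 < C ∧
      ∀ (N : ℕ) (T : ℝ) (B : ℝ → Fin N → Fin N → ℝ) (w₀ : Fin N → ℝ)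
        (M : Fin N → ℕ) (t : Fin N → ℕ → ℝ) (q : Fin N → ℕ → ℕ)
        (Msl : ℕ) (Tlev : ℕ → ℝ) (p : ENNReal) (CB : ℕ → ℝ) (W : ℝ → Fin N → ℝ),
        0 < T → IsPartition N T M t →
        (∀ (i : Fin N) (j : ℕ), 1 ≤ j → j ≤ M i → q i j ≤ qmax) →
        1 ≤ Msl → Tlev 0 = 0 → Tlev Msl = T →
        (∀ n : ℕ, 1 ≤ n → n ≤ Msl → Tlev (n - 1) < Tlev n) →
        (∀ (i : Fin N) (j : ℕ), 1 ≤ j → j ≤ M i →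
          ∃ n : ℕ, 1 ≤ n ∧ n ≤ Msl ∧ Tlev (n - 1) ≤ t i (j - 1) ∧ t i j ≤ Tlev n) →
        1 ≤ p →
        -- B is bounded and measurable
        Measurable B →
        (∃ c : ℝ, ∀ (s : ℝ) (i l : Fin N), |B s i l| ≤ c) →
        -- W is the mcG(q) or mdG(q) solution with f(x,s) = -B(s)x
        (IsMcG N T (fun x s i => -∑ l, B s i l * x l) w₀ M t q W ∨
         IsMdG N T (fun x s i => -∑ l, B s i l * x l) w₀ M t q W) →
        -- CB n bounds the l_p operator norm of B on the n-th time slab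
        (∀ n : ℕ, 1 ≤ n → n ≤ Msl → ∀ s ∈ Set.Icc (Tlev (n - 1)) (Tlev n),
          ∀ w : Fin N → ℝ, lpNorm p (fun i => ∑ l, B s i l * w l) ≤ CB n * lpNorm p w) →
        -- K_n C ‖B‖ ≤ 1 on every slab
        (∀ n : ℕ, 1 ≤ n → n ≤ Msl → (Tlev n - Tlev (n - 1)) * C * CB n ≤ 1) →
        ∀ n : ℕ, 1 ≤ n → n ≤ Msl → ∀ s ∈ Set.Icc (Tlev (n - 1)) (Tlev n),
          lpNorm p (W s) ≤ C * lpNorm p w₀ *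
            Real.exp (∑ m ∈ Finset.Icc 1 (n - 1), (Tlev m - Tlev (m - 1)) * C * CB m) := by
  obtain ⟨C', hC', H⟩ := stab_main qmax
  refine ⟨2 * C', by linarith, ?_⟩
  intro N T B w₀ M t q Msl Tlev p CB W hT hpart hq hMsl hT0 hTM hTl hsync hp hBm hBb hW hCB hsmall
  obtain ⟨h0, hWi, hgi, hloc⟩ := H N T B w₀ M t q W hT hpart hq hBm hBb hW
  haveI : Fact (1 ≤ p) := ⟨hp⟩
  have hnn : ∀ x : Fin N → ℝ, 0 ≤ _root_.lpNorm p x := fun x =>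
    norm_nonneg (WithLp.toLp p x : PiLp p (fun _ : Fin N => ℝ))
  rcases Nat.eq_zero_or_pos N with hN | hN
  · subst hN
    intro n _ _ s _
    have hz : ∀ x : Fin 0 → ℝ, _root_.lpNorm p x = 0 := by
      intro x
      have : (WithLp.toLp p x : PiLp p (fun _ : Fin 0 => ℝ)) = 0 := Subsingleton.elim _ _
      change ‖(WithLp.toLp p x : PiLp p (fun _ : Fin 0 => ℝ))‖ = 0
      rw [this, norm_zero]
    rw [hz, hz]; simp
  have Tm := steps_mono Tlev Msl hTl
  have hTr : ∀ j, j ≤ Msl → 0 ≤ Tlev j ∧ Tlev j ≤ T := fun j hj =>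
    ⟨hT0 ▸ Tm 0 j (Nat.zero_le _) hj, hTM ▸ Tm j Msl hj le_rfl⟩
  have hCB0 : ∀ n, 1 ≤ n → n ≤ Msl → 0 ≤ CB n := by
    intro n hn hn'
    have h1 := hCB n hn hn' (Tlev n) ⟨(hTl n hn hn').le, le_rfl⟩ (fun _ => 1)
    have h2 : 0 < _root_.lpNorm p (fun _ : Fin N => (1:ℝ)) := by
      change 0 < ‖(WithLp.toLp p (fun _ => 1) : PiLp p (fun _ : Fin N => ℝ))‖
      rw [norm_pos_iff]
      intro hc
      have := congrArg (fun v : PiLp p (fun _ : Fin N => ℝ) => v ⟨0, hN⟩) hc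
      simp at this
    have h3 := (hnn _).trans h1
    by_contra hc
    push Not at hc
    nlinarith
  have hslab : ∀ n, 1 ≤ n → n ≤ Msl → ∀ s ∈ Set.Icc (Tlev (n - 1)) (Tlev n),
      _root_.lpNorm p (W s) ≤
      (1 + (Tlev n - Tlev (n - 1)) * (2 * C') * CB n) * _root_.lpNorm p (W (Tlev (n-1))) := by
    intro n hn hn'
    have hlt := hTl n hn hn'
    have hsub : Set.uIcc (Tlev (n-1)) (Tlev n) ⊆ Set.uIcc 0 T := by
      rw [Set.uIcc_of_le hT.le, Set.uIcc_of_le hlt.le]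
      exact Set.Icc_subset_Icc (hTr (n-1) (by omega)).1 (hTr n hn').2
    apply slab_vec p hp W (fun s i => -∑ l, B s i l * W s l) (Tlev (n-1)) (Tlev n) C' (CB n)
      hlt (by linarith) (hCB0 n hn hn') (fun i => (hWi i).mono_set hsub)
      (fun i => (hgi i).mono_set hsub)
    · intro s hs
      refine le_trans (le_of_eq ?_) (hCB n hn hn' s hs (W s))
      exact norm_neg (WithLp.toLp p (fun i => ∑ l, B s i l * W s l) : PiLp p (fun _ : Fin N => ℝ))
    · intro s hs i
      obtain ⟨_, ht0, htM, ht⟩ := hpart i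
      exact comp_slab T (M i) (t i) Msl Tlev C' hC' (fun s => W s i)
        (fun s => -∑ l, B s i l * W s l) ht0 htM ht hT0 hTM hTl (hsync i) (hgi i)
        (hloc i).1 (hloc i).2 n hn hn' s hs
    · exact hsmall n hn hn'
  have hend : ∀ n, n ≤ Msl → _root_.lpNorm p (W (Tlev n)) ≤ _root_.lpNorm p w₀ *
      Real.exp (∑ m ∈ Finset.Icc 1 n, (Tlev m - Tlev (m - 1)) * (2 * C') * CB m) := by
    intro n
    induction n with
    | zero => intro _; simp [hT0, h0]
    | succ n ih =>
      intro hn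
      have h1 := hslab (n+1) (by omega) hn (Tlev (n+1)) ⟨(hTl (n+1) (by omega) hn).le, le_rfl⟩
      have h2 := ih (by omega)
      rw [Finset.sum_Icc_succ_top (by omega), Real.exp_add]
      simp only [Nat.add_sub_cancel] at h1 ⊢
      have h3 := Real.add_one_le_exp ((Tlev (n+1) - Tlev n) * (2 * C') * CB (n+1))
      rw [add_comm] at h3
      calc _ ≤ _ := h1
        _ ≤ Real.exp ((Tlev (n+1) - Tlev n) * (2 * C') * CB (n+1)) * _ :=
          mul_le_mul h3 h2 (hnn _) (Real.exp_pos _).le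
        _ = _ := by ring
  intro n hn hn' s hs
  have h1 := hslab n hn hn' s hs
  have h2 := hend (n-1) (by omega)
  have h3 := hsmall n hn hn'
  calc _ ≤ _ := h1
    _ ≤ (2 * C') * (_root_.lpNorm p w₀ *
      Real.exp (∑ m ∈ Finset.Icc 1 (n-1), (Tlev m - Tlev (m - 1)) * (2 * C') * CB m)) :=
        mul_le_mul (by linarith) h2 (hnn _) (by linarith)
    _ = _ := by ring
end
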